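/- arXiv:0911.3565 — 3 statements merged into one kernel-verified Lean document; each statement's English description precedes it below -/
import Mathlib

section
/- Let A be an Artinian Gorenstein local K-algebra with Hilbert function {1,2,2,2,1}. Then A is isomorphic as a K-algebra to one and only one of the following quotients of R = K[[x_1,x_2]]: (a) R/(x_1^4, x_2^2); (b) R/(x_1^4, −x_1^3 + x_2^2); (c) R/(x_1^2 + x_2^2, x_2^4). Moreover the rings in cases (a) and (c) are isomorphic to their associated graded rings, while the ring in case (b) is not. -/
/-- The Hilbert function
`HF_A(i) = dim_K (m^i/m^(i+1)) = dim_K A/m^(i+1) - dim_K A/m^i`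
of a local `K`-algebra `A` with maximal ideal `m`. -/
noncomputable def hilbLoc (K : Type*) [Field K] (A : Type*) [CommRing A] [IsLocalRing A]
    [Algebra K A] (i : ℕ) : ℕ :=
  Module.finrank K (A ⧸ (IsLocalRing.maximalIdeal A ^ (i + 1))) -
    Module.finrank K (A ⧸ (IsLocalRing.maximalIdeal A ^ i))

/-- `dim_K` of the socle `(0 : m)` of a local `K`-algebra `A`;
an Artinian local ring `A` is Gorenstein iff this equals `1`. -/
noncomputable def socDimLoc (K : Type*) [Field K] (A : Type*) [CommRing A] [IsLocalRing A]
    [Algebra K A] : ℕ :=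
  Module.finrank K
    ((Submodule.colon (⊥ : Ideal A) (IsLocalRing.maximalIdeal A)).restrictScalars K)

/-- The residue field of the local `K`-algebra `A` is `K` itself,
via the structure map. -/
def residueFieldIsK (K : Type*) [Field K] (A : Type*) [CommRing A] [IsLocalRing A]
    [Algebra K A] : Prop :=
  Function.Bijective (algebraMap K (IsLocalRing.ResidueField A))

/-- The maximal ideal `M = (x_1, …, x_n)` of `R = K[[x_1,…,x_n]]`,
i.e. the ideal of power series with zero constant term. -/
noncomputable def mxR (K : Type*) [Field K] (n : ℕ) : Ideal (MvPowerSeries (Fin n) K) :=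
  RingHom.ker (MvPowerSeries.constantCoeff (σ := Fin n) (R := K))

/-- The Hilbert function of `A = R/I` where `R = K[[x_1,…,x_n]]`:
`HF_A(i) = dim_K (m^i/m^(i+1)) = dim_K A/m^(i+1) - dim_K A/m^i`, computed via
`A/m^j = R/(I + M^j)` where `M = (x_1,…,x_n)`. -/
noncomputable def hilbQ {K : Type*} [Field K] {n : ℕ}
    (I : Ideal (MvPowerSeries (Fin n) K)) (i : ℕ) : ℕ :=
  Module.finrank K (MvPowerSeries (Fin n) K ⧸ (I ⊔ mxR K n ^ (i + 1))) -
    Module.finrank K (MvPowerSeries (Fin n) K ⧸ (I ⊔ mxR K n ^ i))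

/-- `dim_K` of the socle `(0 :_A m)` of `A = R/I`, where `m = M/I` is the
maximal ideal of `A`.  The Artinian local ring `A = R/I` is Gorenstein iff
this equals `1`. -/
noncomputable def socDimQ {K : Type*} [Field K] {n : ℕ}
    (I : Ideal (MvPowerSeries (Fin n) K)) : ℕ :=
  Module.finrank K
    ((Submodule.colon (⊥ : Ideal (MvPowerSeries (Fin n) K ⧸ I))
      ((mxR K n).map (Ideal.Quotient.mk I))).restrictScalars K)

/-- The total degree `|α| = α 1 + ⋯ + α n` of a multi-index. -/
def degM {n : ℕ} (α : Fin n →₀ ℕ) : ℕ := ∑ i, α i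

/-- The ideal `I^*` of `R` generated by the initial forms `f^*` of the elements
`f ∈ I` (for `f ≠ 0` of order `d`, `f^*` is the degree-`d` homogeneous component
of `f`; the set below consists of all such initial forms, together with `0`).
For an ideal `I` with `R/I` Artinian, `R/I^*` is (canonically isomorphic to) the
associated graded ring `gr_m(R/I) = ⊕_{i ≥ 0} m^i/m^(i+1)` of `A = R/I`. -/
noncomputable def initialIdeal {K : Type*} [Field K] {n : ℕ}
    (I : Ideal (MvPowerSeries (Fin n) K)) : Ideal (MvPowerSeries (Fin n) K) :=
  Ideal.span { g | ∃ f ∈ I, ∃ d : ℕ,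
    (∀ α : Fin n →₀ ℕ, degM α < d → MvPowerSeries.coeff α f = 0) ∧
    (∀ α : Fin n →₀ ℕ, MvPowerSeries.coeff α g =
      if degM α = d then MvPowerSeries.coeff α f else 0) }

/-- The variable `x_i` of `R = K[[x_1,…,x_n]]`. -/
noncomputable def psX {K : Type*} [Field K] {n : ℕ} (i : Fin n) :
    MvPowerSeries (Fin n) K := MvPowerSeries.X i

/-!
Since `𝔪² / 𝔪³` has dimension two, some nonzero quadratic form in two generators `x, y` of `𝔪` lies
in `𝔪³`; over `K` it is a product of two linear forms, so one may assume `x y ∈ 𝔪³` or `y² ∈ 𝔪³`.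
In the first case `x` and `y` can be corrected to satisfy `x y = 0`. Then `x⁴` and `y⁴` both span
the socle `𝔪⁴`, and after choosing `l` with `l⁴ x⁴ = -y⁴` the generators `l x + y` and
`i (l x - y)` satisfy the relations (c). In the second case one normalizes to `x⁴ = 0` and
`y² = α x³`, which is (a) if `α = 0` and becomes (b) after rescaling `x` otherwise. Each
presentation is an isomorphism, because the quotient of `R` by a normal form has dimension at most
`8 = dim A`.

The three rings are separated by the largest `k` such that `ℓ² ∈ 𝔪ᵏ` for some `ℓ ∈ 𝔪 ∖ 𝔪²`: it is
infinite for (a), `3` for (b) and `2` for (c). The initial ideal of (b) contains `x₂²`, which makes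
it infinite for the associated graded ring of (b).
-/

namespace Hilbert12221

open MvPowerSeries IsLocalRing
open Finset.HasAntidiagonal (antidiagonal mem_antidiagonal)

section PowersOfMaximalIdeal

variable {K : Type*} [Field K] {n : ℕ}

lemma degM_eq_degree (α : Fin n →₀ ℕ) : degM α = α.degree :=
  (Finsupp.degree_eq_sum α).symm

lemma mem_mxR_iff_one_le_order {f : MvPowerSeries (Fin n) K} : f ∈ mxR K n ↔ 1 ≤ f.order :=
  one_le_order_iff_constCoeff_eq_zero.symm

lemma mxR_eq_maximalIdeal : mxR K n = maximalIdeal (MvPowerSeries (Fin n) K) := by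
  ext f
  rw [mem_maximalIdeal, mem_nonunits_iff, isUnit_iff_constantCoeff, isUnit_iff_ne_zero, not_not]
  rfl

lemma psX_mem_mxR (i : Fin n) : psX i ∈ mxR K n := constantCoeff_X i

lemma psX_pow_mem_mxR_pow (i : Fin n) {k m : ℕ} (h : k ≤ m) : psX i ^ m ∈ mxR K n ^ k :=
  Ideal.pow_le_pow_right h (Ideal.pow_mem_pow (psX_mem_mxR i) m)

lemma le_order_of_mem_mxR_pow {k : ℕ} {f : MvPowerSeries (Fin n) K} (hf : f ∈ mxR K n ^ k) :
    k ≤ f.order := by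
  induction k generalizing f with
  | zero => simp
  | succ k ih =>
    rw [pow_succ] at hf
    refine Submodule.mul_induction_on hf (fun a ha b hb ↦ ?_) fun a b ha hb ↦
      (le_min ha hb).trans min_order_le_add
    push_cast
    exact (add_le_add (ih ha) (mem_mxR_iff_one_le_order.1 hb)).trans le_order_mul

lemma coeff_psX_mul (i : Fin n) (g : MvPowerSeries (Fin n) K) (α : Fin n →₀ ℕ) :
    coeff α (psX i * g) = if α i ≠ 0 then coeff (α - Finsupp.single i 1) g else 0 := by
  classical
  simp only [psX, X, coeff_monomial_mul, one_mul, Finsupp.single_le_iff, Nat.one_le_iff_ne_zero]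

lemma existsUnique_first_ne_zero {α : Fin n →₀ ℕ} (hα : α ≠ 0) :
    ∃! i, α i ≠ 0 ∧ ∀ j < i, α j = 0 := by
  obtain ⟨i, hi, hmin⟩ := wellFounded_lt.has_min {i | α i ≠ 0} (DFunLike.ne_iff.1 hα)
  refine ⟨i, ⟨hi, fun j hj ↦ of_not_not fun h ↦ hmin j h hj⟩, fun j ⟨hj, hj'⟩ ↦ ?_⟩
  exact le_antisymm (not_lt.1 fun h ↦ hi (hj' i h)) (not_lt.1 (hmin j hj))

lemma exists_eq_sum_psX_mul {k : ℕ} {f : MvPowerSeries (Fin n) K} (hf : (k + 1 : ℕ) ≤ f.order) :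
    ∃ g : Fin n → MvPowerSeries (Fin n) K, f = ∑ i, psX i * g i ∧ ∀ i, k ≤ (g i).order := by
  classical
  -- `psX i * g i` collects the monomials of `f` whose first variable is the `i`-th one.
  let g (i : Fin n) : MvPowerSeries (Fin n) K := fun β ↦
    if ∀ j < i, β j = 0 then coeff (β + Finsupp.single i 1) f else 0
  have coeff_g (i : Fin n) (β : Fin n →₀ ℕ) : coeff β (g i) =
    if ∀ j < i, β j = 0 then coeff (β + Finsupp.single i 1) f else 0 := rfl
  have coeff_psX_mul_g (i : Fin n) (α : Fin n →₀ ℕ) : coeff α (psX i * g i) =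
      if α i ≠ 0 ∧ ∀ j < i, α j = 0 then coeff α f else 0 := by
    rw [coeff_psX_mul, ite_and]
    refine if_ctx_congr Iff.rfl (fun h ↦ ?_) fun _ ↦ rfl
    rw [coeff_g, tsub_add_cancel_of_le (Finsupp.single_le_iff.2 (Nat.one_le_iff_ne_zero.2 h))]
    refine if_ctx_congr (forall₂_congr fun j hj ↦ ?_) (fun _ ↦ rfl) fun _ ↦ rfl
    rw [Finsupp.tsub_apply, Finsupp.single_eq_of_ne hj.ne, tsub_zero]
  refine ⟨g, ?_, fun i ↦ nat_le_order fun β hβ ↦ ?_⟩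
  · ext α
    simp only [map_sum, coeff_psX_mul_g]
    rcases eq_or_ne α 0 with rfl | hα
    · simpa using coeff_of_lt_order (d := 0) (lt_of_lt_of_le (by simp) hf)
    · obtain ⟨i, hi, huniq⟩ := existsUnique_first_ne_zero hα
      rw [Finset.sum_eq_single_of_mem i (Finset.mem_univ i) fun j _ hj ↦
        if_neg fun h ↦ hj (huniq j h), if_pos hi]
  · rw [coeff_g, coeff_of_lt_order, ite_self]
    refine lt_of_lt_of_le ?_ hf
    rw [map_add, Finsupp.degree_single]
    exact_mod_cast Nat.add_lt_add_right hβ 1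

theorem mem_mxR_pow_iff {k : ℕ} {f : MvPowerSeries (Fin n) K} :
    f ∈ mxR K n ^ k ↔ k ≤ f.order := by
  refine ⟨le_order_of_mem_mxR_pow, fun hf ↦ ?_⟩
  induction k generalizing f with
  | zero => simp
  | succ k ih =>
    obtain ⟨g, rfl, hg⟩ := exists_eq_sum_psX_mul hf
    rw [pow_succ']
    exact sum_mem fun i _ ↦ Ideal.mul_mem_mul (psX_mem_mxR i) (ih (hg i))

lemma coeff_eq_zero_of_mem_mxR_pow {k : ℕ} {f : MvPowerSeries (Fin n) K} (hf : f ∈ mxR K n ^ k)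
    {α : Fin n →₀ ℕ} (hα : α.degree < k) : coeff α f = 0 :=
  coeff_of_lt_order (lt_of_lt_of_le (by exact_mod_cast hα) (mem_mxR_pow_iff.1 hf))

end PowersOfMaximalIdeal

section InitialIdeal

variable {K : Type*} [Field K] {n : ℕ}

lemma isHomogeneous_psX_pow (i : Fin n) (d : ℕ) :
    (psX i ^ d : MvPowerSeries (Fin n) K).IsHomogeneous d := by
  classical
  intro α hα
  rw [psX, coeff_X_pow] at hα
  rw [of_not_not fun h ↦ hα (if_neg h)]
  simp [Finsupp.weight_single]

lemma homogeneousComponent_mem_initialIdeal {I : Ideal (MvPowerSeries (Fin n) K)}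
    {f : MvPowerSeries (Fin n) K} (hf : f ∈ I) {d : ℕ} (hd : d ≤ f.order) :
    homogeneousComponent d f ∈ initialIdeal I := by
  refine Ideal.subset_span
    ⟨f, hf, d, fun α hα ↦ coeff_of_lt_order (lt_of_lt_of_le ?_ hd), fun α ↦ ?_⟩
  · rw [degM_eq_degree] at hα
    exact_mod_cast hα
  · rw [coeff_homogeneousComponent, degM_eq_degree]

lemma initialIdeal_le_iff {I J : Ideal (MvPowerSeries (Fin n) K)} :
    initialIdeal I ≤ J ↔ ∀ f ∈ I, ∀ d : ℕ, d ≤ f.order → homogeneousComponent d f ∈ J := by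
  refine ⟨fun h f hf d hd ↦ h (homogeneousComponent_mem_initialIdeal hf hd), fun h ↦ ?_⟩
  rw [initialIdeal, Ideal.span_le]
  rintro g ⟨f, hf, d, hd, hg⟩
  have g_eq : g = homogeneousComponent d f := by
    ext α
    rw [hg, coeff_homogeneousComponent, degM_eq_degree]
  rw [g_eq]
  exact h f hf d (nat_le_order fun α hα ↦ hd α (by rwa [degM_eq_degree]))

lemma initialIdeal_le_mxR_pow {I : Ideal (MvPowerSeries (Fin n) K)} {k : ℕ}
    (hI : I ≤ mxR K n ^ k) : initialIdeal I ≤ mxR K n ^ k := by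
  refine initialIdeal_le_iff.2 fun f hf d _ ↦ mem_mxR_pow_iff.2 (nat_le_order fun α hα ↦ ?_)
  rw [coeff_homogeneousComponent, coeff_eq_zero_of_mem_mxR_pow (hI hf) hα, ite_self]

lemma homogeneousComponent_mul_of_isHomogeneous {g : MvPowerSeries (Fin n) K} {e : ℕ}
    (hg : g.IsHomogeneous e) (f : MvPowerSeries (Fin n) K) (d : ℕ) :
    homogeneousComponent d (f * g) =
      if e ≤ d then homogeneousComponent (d - e) f * g else 0 := by
  classical
  ext α
  have coeff_term (β γ : Fin n →₀ ℕ) (h : β + γ = α) :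
      (if α.degree = d then coeff β f * coeff γ g else 0) =
        if e ≤ d then coeff β (homogeneousComponent (d - e) f) * coeff γ g else 0 := by
    have degree_add : β.degree + γ.degree = α.degree := by rw [← h, map_add]
    rcases eq_or_ne γ.degree e with hγ | hγ
    · rw [coeff_homogeneousComponent]
      grind
    · simp [hg.coeff_eq_zero hγ]
  simpa only [coeff_homogeneousComponent, coeff_mul, apply_ite (coeff α), map_zero,
    Finset.sum_ite_irrel, Finset.sum_const_zero] using Finset.sum_congr rfl
      fun p hp ↦ coeff_term p.1 p.2 (mem_antidiagonal.1 hp)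

lemma homogeneousComponent_mem_span {S : Set (MvPowerSeries (Fin n) K)}
    (hS : ∀ g ∈ S, ∃ e, g.IsHomogeneous e) {f : MvPowerSeries (Fin n) K}
    (hf : f ∈ Ideal.span S) (d : ℕ) : homogeneousComponent d f ∈ Ideal.span S := by
  induction hf using Submodule.closure_induction with
  | zero => simp
  | add f₁ f₂ _ _ h₁ h₂ => rw [map_add]; exact add_mem h₁ h₂
  | smul_mem f g hg =>
    obtain ⟨e, he⟩ := hS g hg
    rw [smul_eq_mul, homogeneousComponent_mul_of_isHomogeneous he]
    split_ifs
    · exact Ideal.mul_mem_left _ _ (Ideal.subset_span hg)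
    · exact zero_mem _

theorem initialIdeal_span_of_isHomogeneous {S : Set (MvPowerSeries (Fin n) K)}
    (hS : ∀ g ∈ S, ∃ d, g.IsHomogeneous d) : initialIdeal (Ideal.span S) = Ideal.span S := by
  refine le_antisymm (initialIdeal_le_iff.2 fun f hf d _ ↦ homogeneousComponent_mem_span hS hf d)
    (Ideal.span_le.2 fun g hg ↦ ?_)
  obtain ⟨d, hd⟩ := hS g hg
  rw [isHomogeneous_iff_eq_homogeneousComponent.1 hd]
  exact homogeneousComponent_mem_initialIdeal (Ideal.subset_span hg)
    (nat_le_order fun α hα ↦ hd.coeff_eq_zero hα.ne)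

end InitialIdeal

section Bicoefficients

variable {K : Type*} [Field K]

/-- The coefficient of `x₁ ^ i * x₂ ^ j` in a power series in two variables. -/
noncomputable def bicoeff (i j : ℕ) : MvPowerSeries (Fin 2) K →ₗ[K] K :=
  coeff (Finsupp.single 0 i + Finsupp.single 1 j)

lemma single_add_single_eq_iff {i j : ℕ} {α : Fin 2 →₀ ℕ} :
    Finsupp.single 0 i + Finsupp.single 1 j = α ↔ i = α 0 ∧ j = α 1 := by
  simp [Finsupp.ext_iff, Fin.forall_fin_two]

lemma coeff_eq_bicoeff (α : Fin 2 →₀ ℕ) (f : MvPowerSeries (Fin 2) K) :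
    coeff α f = bicoeff (α 0) (α 1) f := by
  rw [bicoeff, single_add_single_eq_iff.2 ⟨rfl, rfl⟩]

lemma bicoeff_mul (i j : ℕ) (f g : MvPowerSeries (Fin 2) K) :
    bicoeff i j (f * g) = ∑ p ∈ antidiagonal i, ∑ q ∈ antidiagonal j,
      bicoeff p.1 q.1 f * bicoeff p.2 q.2 g := by
  classical
  simp only [bicoeff, coeff_mul, ← Finset.sum_product']
  refine Finset.sum_nbij' (fun α ↦ ((α.1 0, α.2 0), (α.1 1, α.2 1)))
    (fun p ↦ (Finsupp.single 0 p.1.1 + Finsupp.single 1 p.2.1,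
      Finsupp.single 0 p.1.2 + Finsupp.single 1 p.2.2)) ?_ ?_ ?_ ?_ ?_ <;>
  simp +contextual [Finsupp.ext_iff, Fin.forall_fin_two, coeff_eq_bicoeff]

lemma bicoeff_psX_zero_pow (i j d : ℕ) :
    bicoeff i j (psX 0 ^ d : MvPowerSeries (Fin 2) K) = if i = d ∧ j = 0 then 1 else 0 := by
  classical
  simp [bicoeff, psX, coeff_X_pow, single_add_single_eq_iff]

lemma bicoeff_psX_one_pow (i j d : ℕ) :
    bicoeff i j (psX 1 ^ d : MvPowerSeries (Fin 2) K) = if i = 0 ∧ j = d then 1 else 0 := by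
  classical
  simp [bicoeff, psX, coeff_X_pow, single_add_single_eq_iff]

lemma bicoeff_eq_zero_of_mem_mxR_pow {k i j : ℕ} {f : MvPowerSeries (Fin 2) K}
    (hf : f ∈ mxR K 2 ^ k) (hij : i + j < k) : bicoeff i j f = 0 :=
  coeff_eq_zero_of_mem_mxR_pow hf (by simpa using hij)

lemma mem_mxR_sq_iff {f : MvPowerSeries (Fin 2) K} (hf : f ∈ mxR K 2) :
    f ∈ mxR K 2 ^ 2 ↔ bicoeff 1 0 f = 0 ∧ bicoeff 0 1 f = 0 := by
  refine ⟨fun h ↦ ⟨bicoeff_eq_zero_of_mem_mxR_pow h one_lt_two,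
    bicoeff_eq_zero_of_mem_mxR_pow h one_lt_two⟩, fun ⟨h10, h01⟩ ↦ mem_mxR_pow_iff.2 ?_⟩
  have h00 : bicoeff 0 0 f = 0 :=
    bicoeff_eq_zero_of_mem_mxR_pow (k := 1) (by rwa [pow_one]) one_pos
  refine nat_le_order fun α hα ↦ ?_
  rw [Finsupp.degree_eq_sum, Fin.sum_univ_two] at hα
  rw [coeff_eq_bicoeff]
  obtain ⟨e0, e1⟩ | ⟨e0, e1⟩ | ⟨e0, e1⟩ :
      α 0 = 0 ∧ α 1 = 0 ∨ α 0 = 1 ∧ α 1 = 0 ∨ α 0 = 0 ∧ α 1 = 1 := by omega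
  all_goals rw [e0, e1]; assumption

end Bicoefficients

section SquareInvariant

/-- A ring invariant which, for a local ring with maximal ideal `𝔪`, says that some
`ℓ ∈ 𝔪 \ 𝔪 ^ 2` satisfies `ℓ ^ 2 ∈ 𝔪 ^ k`. The Jacobson radical stands in for `𝔪`, so that it
applies to a quotient of a local ring before the quotient is known to be local. -/
def HasSqMemJacobsonPow (B : Type*) [CommRing B] (k : ℕ) : Prop :=
  ∃ ℓ ∈ Ring.jacobson B, ℓ ∉ Ring.jacobson B ^ 2 ∧ ℓ ^ 2 ∈ Ring.jacobson B ^ k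

variable {B C : Type*} [CommRing B] [CommRing C]

lemma HasSqMemJacobsonPow.anti {j k : ℕ} (hjk : j ≤ k) (h : HasSqMemJacobsonPow B k) :
    HasSqMemJacobsonPow B j :=
  let ⟨ℓ, hℓ, hℓ2, hk⟩ := h
  ⟨ℓ, hℓ, hℓ2, Ideal.pow_le_pow_right hjk hk⟩

lemma map_mem_jacobson_pow_iff {f : B →+* C} (hf : Function.Surjective f)
    (hker : RingHom.ker f ≤ Ring.jacobson B) (k : ℕ) (b : B) :
    f b ∈ Ring.jacobson C ^ k ↔ b ∈ RingHom.ker f ⊔ Ring.jacobson B ^ k := by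
  have : RingHomSurjective f := ⟨hf⟩
  have map_jacobson : (Ring.jacobson B).map f = Ring.jacobson C :=
    (Ideal.map_eq_submodule_map f _).trans (Ring.map_jacobson_of_ker_le hker)
  rw [← map_jacobson, ← Ideal.map_pow, ← Ideal.mem_comap, Ideal.comap_map_of_surjective f hf,
    sup_comm, RingHom.ker]

lemma hasSqMemJacobsonPow_iff_of_surjective {f : B →+* C} (hf : Function.Surjective f)
    (hker : RingHom.ker f ≤ Ring.jacobson B ^ 2) (k : ℕ) :
    HasSqMemJacobsonPow C k ↔ ∃ ℓ ∈ Ring.jacobson B, ℓ ∉ Ring.jacobson B ^ 2 ∧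
      ℓ ^ 2 ∈ RingHom.ker f ⊔ Ring.jacobson B ^ k := by
  have hker' := hker.trans (Ideal.pow_le_self two_ne_zero)
  have mem_iff (b : B) : f b ∈ Ring.jacobson C ↔ b ∈ Ring.jacobson B := by
    simpa [hker'] using map_mem_jacobson_pow_iff hf hker' 1 b
  have mem_sq_iff (b : B) : f b ∈ Ring.jacobson C ^ 2 ↔ b ∈ Ring.jacobson B ^ 2 := by
    rw [map_mem_jacobson_pow_iff hf hker', sup_eq_right.2 hker]
  simp only [HasSqMemJacobsonPow, hf.exists, mem_iff, mem_sq_iff, ← map_pow,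
    map_mem_jacobson_pow_iff hf hker']

lemma HasSqMemJacobsonPow.of_ringEquiv (e : B ≃+* C) {k : ℕ} (h : HasSqMemJacobsonPow C k) :
    HasSqMemJacobsonPow B k := by
  have ker_eq : RingHom.ker (e : B →+* C) = ⊥ := RingHom.ker_coe_equiv e
  simpa [HasSqMemJacobsonPow, ker_eq] using
    (hasSqMemJacobsonPow_iff_of_surjective (f := (e : B →+* C)) e.surjective
    (by rw [ker_eq]; exact bot_le) k).1 h

lemma hasSqMemJacobsonPow_quotient_iff {K : Type*} [Field K] {n : ℕ}
    {I : Ideal (MvPowerSeries (Fin n) K)} (hI : I ≤ mxR K n ^ 2) (k : ℕ) :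
    HasSqMemJacobsonPow (MvPowerSeries (Fin n) K ⧸ I) k ↔
      ∃ s ∈ mxR K n, s ∉ mxR K n ^ 2 ∧ s ^ 2 ∈ I ⊔ mxR K n ^ k := by
  have jacobson_eq : Ring.jacobson (MvPowerSeries (Fin n) K) = mxR K n := by
    rw [IsLocalRing.ringJacobson_eq_maximalIdeal, mxR_eq_maximalIdeal]
  rw [hasSqMemJacobsonPow_iff_of_surjective (Ideal.Quotient.mk_surjective (I := I)), Ideal.mk_ker,
    jacobson_eq]
  rwa [Ideal.mk_ker, jacobson_eq]

end SquareInvariant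

section NormalForms

/-- The defining ideals of the three normal forms (a), (b), (c), in this order. -/
noncomputable def normalForm (K : Type*) [Field K] : Fin 3 → Ideal (MvPowerSeries (Fin 2) K) :=
  ![Ideal.span {psX 0 ^ 4, psX 1 ^ 2}, Ideal.span {psX 0 ^ 4, -psX 0 ^ 3 + psX 1 ^ 2},
    Ideal.span {psX 0 ^ 2 + psX 1 ^ 2, psX 1 ^ 4}]

variable {K : Type*} [Field K]

lemma normalForm_le_mxR_sq (k : Fin 3) : normalForm K k ≤ mxR K 2 ^ 2 := by
  have hpow (i : Fin 2) {m : ℕ} (hm : 2 ≤ m) := psX_pow_mem_mxR_pow (K := K) i hm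
  fin_cases k <;> refine Ideal.span_le.2 (Set.pair_subset ?_ ?_)
  exacts [hpow 0 (by norm_num), hpow 1 le_rfl, hpow 0 (by norm_num),
    add_mem (neg_mem (hpow 0 (by norm_num))) (hpow 1 le_rfl),
    add_mem (hpow 0 le_rfl) (hpow 1 le_rfl), hpow 1 (by norm_num)]

lemma initialIdeal_normalForm_zero : initialIdeal (normalForm K 0) = normalForm K 0 := by
  refine initialIdeal_span_of_isHomogeneous ?_
  rintro g (rfl | rfl)
  exacts [⟨4, isHomogeneous_psX_pow 0 4⟩, ⟨2, isHomogeneous_psX_pow 1 2⟩]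

lemma initialIdeal_normalForm_two : initialIdeal (normalForm K 2) = normalForm K 2 := by
  refine initialIdeal_span_of_isHomogeneous ?_
  rintro g (rfl | rfl)
  exacts [⟨2, IsHomogeneous.add (isHomogeneous_psX_pow 0 2) (isHomogeneous_psX_pow 1 2)⟩,
    ⟨4, isHomogeneous_psX_pow 1 4⟩]

lemma psX_one_sq_mem_initialIdeal_normalForm_one :
    psX 1 ^ 2 ∈ initialIdeal (normalForm K 1) := by
  have hf : -psX 0 ^ 3 + psX 1 ^ 2 ∈ normalForm K 1 := Ideal.subset_span (by simp)
  have hf2 := mem_mxR_pow_iff.1 (normalForm_le_mxR_sq 1 hf)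
  convert homogeneousComponent_mem_initialIdeal hf hf2
  have lt_order : (2 : ℕ) < (psX 0 ^ 3 : MvPowerSeries (Fin 2) K).order :=
    lt_of_lt_of_le (by norm_num) (mem_mxR_pow_iff.1 (psX_pow_mem_mxR_pow 0 le_rfl))
  rw [map_add, map_neg, homogeneousComponent_of_lt_order_eq_zero lt_order, neg_zero, zero_add]
  exact isHomogeneous_iff_eq_homogeneousComponent.1 (isHomogeneous_psX_pow 1 2)

lemma hasSqMemJacobsonPow_of_psX_one_sq_mem {I : Ideal (MvPowerSeries (Fin 2) K)}
    (hI : I ≤ mxR K 2 ^ 2) {k : ℕ} (h : psX 1 ^ 2 ∈ I ⊔ mxR K 2 ^ k) :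
    HasSqMemJacobsonPow (MvPowerSeries (Fin 2) K ⧸ I) k := by
  refine (hasSqMemJacobsonPow_quotient_iff hI k).2 ⟨psX 1, psX_mem_mxR 1, fun h1 ↦ ?_, h⟩
  have := bicoeff_psX_one_pow (K := K) 0 1 1
  simp [bicoeff_eq_zero_of_mem_mxR_pow h1] at this

lemma bicoeff_eq_of_mem_normalForm_one_sup {f : MvPowerSeries (Fin 2) K}
    (hf : f ∈ normalForm K 1 ⊔ mxR K 2 ^ 4) :
    bicoeff 2 0 f = 0 ∧ bicoeff 3 0 f + bicoeff 0 2 f = 0 := by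
  obtain ⟨u, hu, v, hv, rfl⟩ := Submodule.mem_sup.1 hf
  obtain ⟨a, b, rfl⟩ := Ideal.mem_span_pair.1 hu
  simp [bicoeff_mul, Finset.Nat.antidiagonal_succ, bicoeff_psX_zero_pow, bicoeff_psX_one_pow,
    bicoeff_eq_zero_of_mem_mxR_pow hv]

lemma bicoeff_eq_of_mem_normalForm_two_sup {f : MvPowerSeries (Fin 2) K}
    (hf : f ∈ normalForm K 2 ⊔ mxR K 2 ^ 3) :
    bicoeff 1 1 f = 0 ∧ bicoeff 2 0 f = bicoeff 0 2 f := by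
  obtain ⟨u, hu, v, hv, rfl⟩ := Submodule.mem_sup.1 hf
  obtain ⟨a, b, rfl⟩ := Ideal.mem_span_pair.1 hu
  simp [bicoeff_mul, Finset.Nat.antidiagonal_succ, bicoeff_psX_zero_pow, bicoeff_psX_one_pow,
    bicoeff_eq_zero_of_mem_mxR_pow hv]

lemma bicoeff_sq_of_mem_mxR {s : MvPowerSeries (Fin 2) K} (hs : s ∈ mxR K 2) :
    bicoeff 2 0 (s ^ 2) = bicoeff 1 0 s ^ 2 ∧ bicoeff 0 2 (s ^ 2) = bicoeff 0 1 s ^ 2 ∧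
    bicoeff 1 1 (s ^ 2) = 2 * (bicoeff 1 0 s * bicoeff 0 1 s) ∧
    bicoeff 3 0 (s ^ 2) = 2 * (bicoeff 1 0 s * bicoeff 2 0 s) := by
  have h00 : bicoeff 0 0 s = 0 :=
    bicoeff_eq_zero_of_mem_mxR_pow (k := 1) (by rwa [pow_one]) one_pos
  refine ⟨?_, ?_, ?_, ?_⟩ <;> rw [pow_two s, bicoeff_mul] <;>
    simp [Finset.Nat.antidiagonal_succ, h00, pow_two, two_mul, mul_comm]

lemma not_hasSqMemJacobsonPow_normalForm_one :
    ¬ HasSqMemJacobsonPow (MvPowerSeries (Fin 2) K ⧸ normalForm K 1) 4 := by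
  rw [hasSqMemJacobsonPow_quotient_iff (normalForm_le_mxR_sq 1)]
  rintro ⟨s, hs, hs2, h⟩
  obtain ⟨h20, h30⟩ := bicoeff_eq_of_mem_normalForm_one_sup h
  obtain ⟨e20, e02, -, e30⟩ := bicoeff_sq_of_mem_mxR hs
  refine hs2 ((mem_mxR_sq_iff hs).2 ?_)
  grind

lemma not_hasSqMemJacobsonPow_normalForm_two [NeZero (2 : K)] :
    ¬ HasSqMemJacobsonPow (MvPowerSeries (Fin 2) K ⧸ normalForm K 2) 3 := by
  rw [hasSqMemJacobsonPow_quotient_iff (normalForm_le_mxR_sq 2)]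
  rintro ⟨s, hs, hs2, h⟩
  obtain ⟨h11, h20⟩ := bicoeff_eq_of_mem_normalForm_two_sup h
  obtain ⟨e20, e02, e11, -⟩ := bicoeff_sq_of_mem_mxR hs
  refine hs2 ((mem_mxR_sq_iff hs).2 ?_)
  have := two_ne_zero (α := K)
  grind

lemma hasSqMemJacobsonPow_normalForm_three_iff [NeZero (2 : K)] (k : Fin 3) :
    HasSqMemJacobsonPow (MvPowerSeries (Fin 2) K ⧸ normalForm K k) 3 ↔ k ≠ 2 := by
  refine ⟨?_, fun hk ↦ hasSqMemJacobsonPow_of_psX_one_sq_mem (normalForm_le_mxR_sq k) ?_⟩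
  · rintro h rfl
    exact not_hasSqMemJacobsonPow_normalForm_two h
  · have e : (psX 1 ^ 2 : MvPowerSeries (Fin 2) K) = (-psX 0 ^ 3 + psX 1 ^ 2) + psX 0 ^ 3 := by ring
    fin_cases k
    · exact Ideal.mem_sup_left (Ideal.subset_span (by simp))
    · rw [e]
      exact Submodule.add_mem_sup (Ideal.subset_span (by simp)) (psX_pow_mem_mxR_pow 0 le_rfl)
    · exact absurd rfl hk

lemma hasSqMemJacobsonPow_normalForm_four_iff [NeZero (2 : K)] (k : Fin 3) :
    HasSqMemJacobsonPow (MvPowerSeries (Fin 2) K ⧸ normalForm K k) 4 ↔ k = 0 := by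
  refine ⟨fun h ↦ ?_, ?_⟩
  · fin_cases k
    · rfl
    · exact absurd h not_hasSqMemJacobsonPow_normalForm_one
    · exact absurd (h.anti (by norm_num)) not_hasSqMemJacobsonPow_normalForm_two
  · rintro rfl
    exact hasSqMemJacobsonPow_of_psX_one_sq_mem (normalForm_le_mxR_sq 0)
      (Ideal.mem_sup_left (Ideal.subset_span (by simp)))

theorem normalForm_injective_of_algEquiv [NeZero (2 : K)] {j k : Fin 3}
    (e : (MvPowerSeries (Fin 2) K ⧸ normalForm K j) ≃ₐ[K]
      (MvPowerSeries (Fin 2) K ⧸ normalForm K k)) : j = k := by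
  have iff_three := (hasSqMemJacobsonPow_normalForm_three_iff j).symm.trans (Iff.trans
    ⟨.of_ringEquiv e.symm.toRingEquiv, .of_ringEquiv e.toRingEquiv⟩
    (hasSqMemJacobsonPow_normalForm_three_iff k))
  have iff_four := (hasSqMemJacobsonPow_normalForm_four_iff j).symm.trans (Iff.trans
    ⟨.of_ringEquiv e.symm.toRingEquiv, .of_ringEquiv e.toRingEquiv⟩
    (hasSqMemJacobsonPow_normalForm_four_iff k))
  omega

theorem isEmpty_normalForm_one_algEquiv_initialIdeal :
    IsEmpty ((MvPowerSeries (Fin 2) K ⧸ normalForm K 1) ≃ₐ[K]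
      (MvPowerSeries (Fin 2) K ⧸ initialIdeal (normalForm K 1))) :=
  ⟨fun e ↦ not_hasSqMemJacobsonPow_normalForm_one <| .of_ringEquiv e.toRingEquiv <|
    hasSqMemJacobsonPow_of_psX_one_sq_mem (initialIdeal_le_mxR_pow (normalForm_le_mxR_sq 1))
      (Ideal.mem_sup_left psX_one_sq_mem_initialIdeal_normalForm_one)⟩

end NormalForms

section NilpotentGenerators

variable {K : Type*} [Field K] {B : Type*} [CommRing B] [Algebra K B]

theorem adjoin_eq_top_of_isNilpotent_span {s : Set B} (hs : IsNilpotent (Ideal.span s))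
    (hK : ∀ b : B, ∃ c : K, b - algebraMap K B c ∈ Ideal.span s) :
    Algebra.adjoin K s = ⊤ := by
  have approx (n : ℕ) (b : B) : ∃ w ∈ Algebra.adjoin K s, b - w ∈ Ideal.span s ^ n := by
    induction n generalizing b with
    | zero => exact ⟨0, zero_mem _, by simp⟩
    | succ n ih =>
      have approx_span (z : B) (hz : z ∈ Ideal.span s) :
          ∃ w ∈ Algebra.adjoin K s, z - w ∈ Ideal.span s ^ (n + 1) := by
        induction hz using Submodule.closure_induction with
        | zero => exact ⟨0, zero_mem _, by simp⟩
        | add z z' _ _ hz hz' =>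
          obtain ⟨w, hw, hzw⟩ := hz
          obtain ⟨w', hw', hzw'⟩ := hz'
          exact ⟨w + w', add_mem hw hw', by simpa only [add_sub_add_comm] using add_mem hzw hzw'⟩
        | smul_mem a z hz =>
          obtain ⟨w, hw, haw⟩ := ih a
          refine ⟨w * z, mul_mem hw (Algebra.subset_adjoin hz), ?_⟩
          rw [smul_eq_mul, ← sub_mul, pow_succ]
          exact Ideal.mul_mem_mul haw (Ideal.subset_span hz)
      obtain ⟨c, hc⟩ := hK b
      obtain ⟨w, hw, hcw⟩ := approx_span _ hc
      exact ⟨algebraMap K B c + w, add_mem (algebraMap_mem _ c) hw, by rwa [← sub_sub]⟩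
  obtain ⟨N, hN⟩ := hs
  refine eq_top_iff.2 fun b _ ↦ ?_
  obtain ⟨w, hw, hbw⟩ := approx N b
  rwa [sub_eq_zero.1 (show b - w = 0 by simpa [hN] using hbw)]

lemma isNilpotent_span_pair {x y : B} (hx : IsNilpotent x) (hy : IsNilpotent y) :
    IsNilpotent (Ideal.span {x, y}) := by
  rw [Ideal.FG.isNilpotent_iff_le_nilradical (Submodule.fg_span (Set.toFinite _)), Ideal.span_le]
  exact Set.pair_subset hx hy

theorem finite_and_finrank_le_of_adjoin_pair_eq_top {x y : B}
    (htop : Algebra.adjoin K {x, y} = ⊤) {m n : ℕ} (hn : n ≠ 0) (hx : x ^ m = 0)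
    {p : Polynomial K} (hy : y ^ n = Polynomial.aeval x p) :
    Module.Finite K B ∧ Module.finrank K B ≤ m * n := by
  let f (q : Fin m × Fin n) : B := x ^ (q.1 : ℕ) * y ^ (q.2 : ℕ)
  have monomial_mem (j i : ℕ) : x ^ i * y ^ j ∈ Submodule.span K (Set.range f) := by
    induction j using Nat.strong_induction_on generalizing i with
    | _ j ih =>
      rcases lt_or_ge j n with hj | hj
      · rcases lt_or_ge i m with hi | hi
        · exact Submodule.subset_span ⟨(⟨i, hi⟩, ⟨j, hj⟩), rfl⟩
        · simp [pow_eq_zero_of_le hi hx]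
      · rw [← Nat.sub_add_cancel hj, pow_add, hy, Polynomial.aeval_eq_sum_range, Finset.mul_sum,
          Finset.mul_sum]
        refine sum_mem fun k _ ↦ ?_
        have := Submodule.smul_mem _ (p.coeff k) (ih (j - n) (by omega) (i + k))
        convert this using 1
        rw [Algebra.smul_def, Algebra.smul_def]
        ring
  have span_eq_top : Submodule.span K (Set.range f) = ⊤ := by
    rw [eq_top_iff, ← Algebra.top_toSubmodule, ← htop, Algebra.adjoin_eq_span, Submodule.span_le]
    intro b hb
    obtain ⟨i, j, rfl⟩ := (Submonoid.mem_closure_pair _ _ _).1 hb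
    exact monomial_mem j i
  refine ⟨⟨span_eq_top ▸ Submodule.fg_span (Set.finite_range f)⟩, ?_⟩
  have := finrank_range_le_card (R := K) f
  rwa [Set.finrank, span_eq_top, finrank_top, Fintype.card_prod, Fintype.card_fin,
    Fintype.card_fin] at this

end NilpotentGenerators

section PowerSeriesPresentations

variable {K : Type*} [Field K]

lemma exists_algHom_psX_eq {A : Type*} [CommRing A] [Algebra K A] {n : ℕ} {v : Fin n → A}
    (hv : ∀ i, IsNilpotent (v i)) :
    ∃ F : MvPowerSeries (Fin n) K →ₐ[K] A, ∀ i, F (psX i) = v i := by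
  let : UniformSpace K := ⊥
  let : UniformSpace A := ⊥
  have : DiscreteTopology K := ⟨rfl⟩
  have : DiscreteTopology A := ⟨rfl⟩
  have : DiscreteUniformity K := ⟨rfl⟩
  have : DiscreteUniformity A := ⟨rfl⟩
  have : ContinuousSMul K A := ⟨continuous_of_discreteTopology⟩
  have hasEval : HasEval v := by
    refine ⟨fun i ↦ ?_, by simp⟩
    obtain ⟨N, hN⟩ := hv i
    exact tendsto_nhds_of_eventually_eq
      (Filter.eventually_atTop.2 ⟨N, fun k hk ↦ pow_eq_zero_of_le hk hN⟩)
  exact ⟨aeval hasEval, fun i ↦ by rw [psX, coe_aeval, eval₂_X]⟩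

lemma exists_sub_algebraMap_mem_span_psX (I : Ideal (MvPowerSeries (Fin 2) K))
    (b : MvPowerSeries (Fin 2) K ⧸ I) : ∃ c : K, b - algebraMap K _ c ∈
      Ideal.span {Ideal.Quotient.mk I (psX 0), Ideal.Quotient.mk I (psX 1)} := by
  obtain ⟨f, rfl⟩ := Ideal.Quotient.mk_surjective b
  refine ⟨constantCoeff f, ?_⟩
  have mem_mxR : f - algebraMap K _ (constantCoeff f) ∈ mxR K 2 := by
    simp [mxR, RingHom.mem_ker, MvPowerSeries.algebraMap_apply]
  obtain ⟨g, hg, -⟩ := exists_eq_sum_psX_mul (k := 0)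
    (by simpa using mem_mxR_iff_one_le_order.1 mem_mxR)
  rw [Fin.sum_univ_two] at hg
  refine Ideal.mem_span_pair.2 ⟨Ideal.Quotient.mk I (g 0), Ideal.Quotient.mk I (g 1), ?_⟩
  rw [← map_mul, ← map_mul, ← map_add, mul_comm (g 0), mul_comm (g 1), ← hg, map_sub]
  rfl

theorem finite_and_finrank_normalForm_le (k : Fin 3) :
    Module.Finite K (MvPowerSeries (Fin 2) K ⧸ normalForm K k) ∧
      Module.finrank K (MvPowerSeries (Fin 2) K ⧸ normalForm K k) ≤ 8 := by
  set x := Ideal.Quotient.mk (normalForm K k) (psX 0)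
  set y := Ideal.Quotient.mk (normalForm K k) (psX 1)
  have htop (hx : IsNilpotent x) (hy : IsNilpotent y) : Algebra.adjoin K {x, y} = ⊤ :=
    adjoin_eq_top_of_isNilpotent_span (isNilpotent_span_pair hx hy)
      (exists_sub_algebraMap_mem_span_psX (normalForm K k))
  have mk_eq_zero (f) (hf : f ∈ normalForm K k) := Ideal.Quotient.eq_zero_iff_mem.2 hf
  fin_cases k
  · have hx4 : x ^ 4 = 0 := mk_eq_zero (psX 0 ^ 4) (Ideal.subset_span (by simp))
    have hy2 : y ^ 2 = 0 := mk_eq_zero (psX 1 ^ 2) (Ideal.subset_span (by simp))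
    exact finite_and_finrank_le_of_adjoin_pair_eq_top (htop ⟨4, hx4⟩ ⟨2, hy2⟩) two_ne_zero hx4
      (p := 0) (by rw [hy2, map_zero])
  · have hx4 : x ^ 4 = 0 := mk_eq_zero (psX 0 ^ 4) (Ideal.subset_span (by simp))
    have hxy : -x ^ 3 + y ^ 2 = 0 :=
      mk_eq_zero (-psX 0 ^ 3 + psX 1 ^ 2) (Ideal.subset_span (by simp))
    have hy4 : y ^ 4 = 0 := by linear_combination (y ^ 2 + x ^ 3) * hxy + x ^ 2 * hx4
    exact finite_and_finrank_le_of_adjoin_pair_eq_top (htop ⟨4, hx4⟩ ⟨4, hy4⟩) two_ne_zero hx4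
      (p := .X ^ 3) (by rw [map_pow, Polynomial.aeval_X]; linear_combination hxy)
  · have hxy : x ^ 2 + y ^ 2 = 0 :=
      mk_eq_zero (psX 0 ^ 2 + psX 1 ^ 2) (Ideal.subset_span (by simp))
    have hy4 : y ^ 4 = 0 := mk_eq_zero (psX 1 ^ 4) (Ideal.subset_span (by simp))
    have hx4 : x ^ 4 = 0 := by linear_combination (x ^ 2 - y ^ 2) * hxy + hy4
    rw [Set.pair_comm] at htop
    exact finite_and_finrank_le_of_adjoin_pair_eq_top (htop ⟨4, hx4⟩ ⟨4, hy4⟩) two_ne_zero hy4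
      (p := -.X ^ 2) (by rw [map_neg, map_pow, Polynomial.aeval_X]; linear_combination hxy)

theorem nonempty_algEquiv_normalForm {A : Type*} [CommRing A] [Algebra K A]
    (hA : Module.finrank K A = 8) {x y : A} (hxy : IsNilpotent (Ideal.span {x, y}))
    (hK : ∀ a : A, ∃ c : K, a - algebraMap K A c ∈ Ideal.span {x, y}) {k : Fin 3}
    (hker : ∀ F : MvPowerSeries (Fin 2) K →ₐ[K] A, F (psX 0) = x → F (psX 1) = y →
      normalForm K k ≤ RingHom.ker F) :
    Nonempty (A ≃ₐ[K] (MvPowerSeries (Fin 2) K ⧸ normalForm K k)) := by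
  have isNilpotent_mem (a : A) (ha : a ∈ Ideal.span {x, y}) : IsNilpotent a :=
    hxy.imp fun N hN ↦ by simpa [hN] using Ideal.pow_mem_pow ha N
  obtain ⟨F, hF⟩ := exists_algHom_psX_eq (K := K) (v := ![x, y]) <| Fin.forall_fin_two.2
    ⟨isNilpotent_mem x (Ideal.subset_span (by simp)),
      isNilpotent_mem y (Ideal.subset_span (by simp))⟩
  have range_eq_top : F.range = ⊤ := by
    rw [eq_top_iff, ← adjoin_eq_top_of_isNilpotent_span hxy hK, Algebra.adjoin_le_iff]
    exact Set.pair_subset ⟨_, hF 0⟩ ⟨_, hF 1⟩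
  let G := Ideal.Quotient.liftₐ (normalForm K k) F (hker F (hF 0) (hF 1))
  have hG : Function.Surjective G :=
    Ideal.Quotient.lift_surjective_of_surjective _ _ (AlgHom.range_eq_top F |>.1 range_eq_top)
  obtain ⟨_, hrank⟩ := finite_and_finrank_normalForm_le (K := K) k
  have : Module.Finite K A := .of_surjective G.toLinearMap hG
  have finrank_eq : Module.finrank K (MvPowerSeries (Fin 2) K ⧸ normalForm K k) =
      Module.finrank K A :=
    le_antisymm (hA ▸ hrank) (G.toLinearMap.finrank_le_finrank_of_surjective hG)
  have hG' : Function.Injective G :=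
    (LinearMap.injective_iff_surjective_of_finrank_eq_finrank (f := G.toLinearMap) finrank_eq).2 hG
  exact ⟨(AlgEquiv.ofBijective G ⟨hG', hG⟩).symm⟩

end PowerSeriesPresentations

section HilbertFunction

variable {K A : Type*} [Field K] [CommRing A] [IsLocalRing A] [Algebra K A]

variable (K A) in
/-- The graded piece `𝔪 ^ k / 𝔪 ^ (k + 1)`, as a subspace of `A ⧸ 𝔪 ^ (k + 1)`. -/
noncomputable def gradedPiece (k : ℕ) : Submodule K (A ⧸ maximalIdeal A ^ (k + 1)) :=
  (Ideal.Quotient.factorₐ K (Ideal.pow_le_pow_right k.le_succ :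
    maximalIdeal A ^ (k + 1) ≤ maximalIdeal A ^ k)).toLinearMap.ker

lemma mk_mem_gradedPiece_iff {k : ℕ} {a : A} :
    Ideal.Quotient.mk (maximalIdeal A ^ (k + 1)) a ∈ gradedPiece K A k ↔
      a ∈ maximalIdeal A ^ k := by
  rw [← Ideal.Quotient.eq_zero_iff_mem]
  rfl

lemma finrank_quotient_pow_succ (k : ℕ) [Module.Finite K (A ⧸ maximalIdeal A ^ (k + 1))] :
    Module.finrank K (A ⧸ maximalIdeal A ^ (k + 1)) =
      Module.finrank K (A ⧸ maximalIdeal A ^ k) + Module.finrank K (gradedPiece K A k) := by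
  let f := (Ideal.Quotient.factorₐ K (Ideal.pow_le_pow_right k.le_succ :
    maximalIdeal A ^ (k + 1) ≤ maximalIdeal A ^ k)).toLinearMap
  have hf : f.range = ⊤ := LinearMap.range_eq_top.2
    (Ideal.Quotient.factor_surjective (Ideal.pow_le_pow_right k.le_succ))
  rw [← f.finrank_range_add_finrank_ker, hf, finrank_top]
  rfl

lemma finrank_gradedPiece (k : ℕ) [Module.Finite K (A ⧸ maximalIdeal A ^ (k + 1))] :
    Module.finrank K (gradedPiece K A k) = hilbLoc K A k := by
  rw [hilbLoc, finrank_quotient_pow_succ, Nat.add_sub_cancel_left]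

lemma finite_of_hilbLoc_ne_zero {k : ℕ} (hk : maximalIdeal A ^ (k + 1) = ⊥)
    (h : hilbLoc K A k ≠ 0) : Module.Finite K A := by
  have : Module.Finite K (A ⧸ maximalIdeal A ^ (k + 1)) :=
    Module.finite_of_finrank_pos (Nat.pos_of_ne_zero fun h0 ↦ h (by rw [hilbLoc, h0, Nat.zero_sub]))
  rw [hk] at this
  exact .equiv (AlgEquiv.quotientBot K A).toLinearEquiv

variable [Module.Finite K A]

lemma finrank_quotient_pow (k : ℕ) :
    Module.finrank K (A ⧸ maximalIdeal A ^ k) = ∑ i ∈ Finset.range k, hilbLoc K A i := by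
  induction k with
  | zero =>
    rw [Finset.range_zero, Finset.sum_empty, pow_zero, Ideal.one_eq_top]
    exact Module.finrank_zero_of_subsingleton
  | succ k ih => rw [finrank_quotient_pow_succ, ih, finrank_gradedPiece, Finset.sum_range_succ]

lemma finrank_eq_sum_hilbLoc {k : ℕ} (hk : maximalIdeal A ^ k = ⊥) :
    Module.finrank K A = ∑ i ∈ Finset.range k, hilbLoc K A i := by
  rw [← finrank_quotient_pow, hk]
  exact (AlgEquiv.quotientBot K A).toLinearEquiv.finrank_eq.symm

lemma exists_sum_smul_mem_pow_succ {ι : Type*} [Fintype ι] {k : ℕ} {v : ι → A}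
    (hv : ∀ i, v i ∈ maximalIdeal A ^ k) (hι : hilbLoc K A k < Fintype.card ι) :
    ∃ c : ι → K, c ≠ 0 ∧ ∑ i, c i • v i ∈ maximalIdeal A ^ (k + 1) := by
  let w (i : ι) : gradedPiece K A k := ⟨_, mk_mem_gradedPiece_iff.2 (hv i)⟩
  have hw : ¬ LinearIndependent K w := fun h ↦
    (h.fintype_card_le_finrank.trans_eq (finrank_gradedPiece k)).not_gt hι
  obtain ⟨c, hc, i, hi⟩ := Fintype.not_linearIndependent_iff.1 hw
  refine ⟨c, fun h ↦ hi (congrFun h i), Ideal.Quotient.eq_zero_iff_mem.1 ?_⟩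
  simpa [w, Algebra.smul_def] using congrArg Subtype.val hc

lemma hilbLoc_le_of_pow_le_span_sup {ι : Type*} [Fintype ι] {k : ℕ} {v : ι → A}
    (hK : ∀ a : A, ∃ c : K, a - algebraMap K A c ∈ maximalIdeal A)
    (hv : ∀ i, v i ∈ maximalIdeal A ^ k)
    (hspan : maximalIdeal A ^ k ≤ Ideal.span (Set.range v) ⊔ maximalIdeal A ^ (k + 1)) :
    hilbLoc K A k ≤ Fintype.card ι := by
  let w (i : ι) : A ⧸ maximalIdeal A ^ (k + 1) := Ideal.Quotient.mk _ (v i)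
  have mul_mem (a : A) (i : ι) :
      Ideal.Quotient.mk _ (a * v i) ∈ Submodule.span K (Set.range w) := by
    obtain ⟨c, hc⟩ := hK a
    have : Ideal.Quotient.mk (maximalIdeal A ^ (k + 1)) (a * v i) =
        algebraMap K _ c * w i := by
      refine (Ideal.Quotient.eq.2 ?_).trans (map_mul _ (algebraMap K A c) (v i))
      rw [← sub_mul, pow_succ']
      exact Ideal.mul_mem_mul hc (hv i)
    rw [this, ← Algebra.smul_def]
    exact Submodule.smul_mem _ c (Submodule.subset_span ⟨i, rfl⟩)
  have gradedPiece_le : gradedPiece K A k ≤ Submodule.span K (Set.range w) := by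
    intro b hb
    obtain ⟨a, rfl⟩ := Ideal.Quotient.mk_surjective b
    obtain ⟨u, hu, t, ht, rfl⟩ := Submodule.mem_sup.1 (hspan (mk_mem_gradedPiece_iff.1 hb))
    obtain ⟨c, rfl⟩ := (Submodule.mem_span_range_iff_exists_fun A).1 hu
    rw [map_add, Ideal.Quotient.eq_zero_iff_mem.2 ht, add_zero, map_sum]
    exact sum_mem fun i _ ↦ mul_mem (c i) i
  rw [← finrank_gradedPiece]
  exact (Submodule.finrank_mono gradedPiece_le).trans (finrank_range_le_card w)

/-- If `𝔪 ^ n` is the last nonzero power, it is contained in the socle, and the two have the same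
dimension. -/
lemma mem_pow_of_mul_eq_zero {n : ℕ} (hn : maximalIdeal A ^ (n + 1) = ⊥)
    (hsoc : socDimLoc K A = hilbLoc K A n) {a : A} (ha : ∀ b ∈ maximalIdeal A, a * b = 0) :
    a ∈ maximalIdeal A ^ n := by
  let colon := Submodule.colon (⊥ : Ideal A) (maximalIdeal A)
  have pow_le : maximalIdeal A ^ n ≤ colon := fun c hc ↦ Submodule.mem_colon.2 fun b hb ↦ by
    rw [← hn, pow_succ]
    exact Ideal.mul_mem_mul hc hb
  have finrank_pow : Module.finrank K ((maximalIdeal A ^ n).restrictScalars K) = hilbLoc K A n := by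
    have add_eq : Module.finrank K (A ⧸ maximalIdeal A ^ n) +
        Module.finrank K ((maximalIdeal A ^ n).restrictScalars K) = Module.finrank K A :=
      ((maximalIdeal A ^ n).restrictScalars K).finrank_quotient_add_finrank
    rw [finrank_eq_sum_hilbLoc hn, Finset.sum_range_succ, finrank_quotient_pow] at add_eq
    exact Nat.add_left_cancel add_eq
  have pow_eq := Submodule.eq_of_le_of_finrank_eq
    (show (maximalIdeal A ^ n).restrictScalars K ≤ colon.restrictScalars K from pow_le)
    (finrank_pow.trans hsoc.symm)
  exact (SetLike.ext_iff.1 pow_eq a).2 (Submodule.mem_colon.2 ha)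

end HilbertFunction

section Generators

variable {A : Type*} [CommRing A] [IsLocalRing A]

lemma mem_maximalIdeal_of_span_pair_eq {x y : A} (hxy : Ideal.span {x, y} = maximalIdeal A) :
    x ∈ maximalIdeal A ∧ y ∈ maximalIdeal A := by
  rw [← hxy]
  exact ⟨Ideal.subset_span (by simp), Ideal.subset_span (by simp)⟩

lemma pow_mul_pow_mem_maximalIdeal_pow {x y : A} (hx : x ∈ maximalIdeal A)
    (hy : y ∈ maximalIdeal A) {i j k : ℕ} (hk : k ≤ i + j) :
    x ^ i * y ^ j ∈ maximalIdeal A ^ k := by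
  refine Ideal.pow_le_pow_right hk ?_
  rw [pow_add]
  exact Ideal.mul_mem_mul (Ideal.pow_mem_pow hx i) (Ideal.pow_mem_pow hy j)

variable [IsNoetherianRing A]

lemma pow_le_of_le_sup_pow_succ {J : Ideal A} {k : ℕ}
    (h : maximalIdeal A ^ k ≤ J ⊔ maximalIdeal A ^ (k + 1)) : maximalIdeal A ^ k ≤ J :=
  Submodule.le_of_le_smul_of_le_jacobson_bot (I := maximalIdeal A) (IsNoetherian.noetherian _)
    (maximalIdeal_le_jacobson _) (by rwa [smul_eq_mul, ← pow_succ'])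

lemma span_pair_eq_maximalIdeal_of_isUnit_det {x y : A}
    (hxy : Ideal.span {x, y} = maximalIdeal A) {a b c d : A} (hdet : IsUnit (a * d - b * c))
    {x' y' : A} (hx' : x' - (a * x + b * y) ∈ maximalIdeal A ^ 2)
    (hy' : y' - (c * x + d * y) ∈ maximalIdeal A ^ 2) : Ideal.span {x', y'} = maximalIdeal A := by
  obtain ⟨hx, hy⟩ := mem_maximalIdeal_of_span_pair_eq hxy
  obtain ⟨e, he⟩ := hdet.exists_right_inv
  have mem_of_sub_mem {z w : A} (h : z - w ∈ maximalIdeal A ^ 2) (hw : w ∈ maximalIdeal A) :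
      z ∈ maximalIdeal A :=
    (Submodule.sub_mem_iff_left _ hw).1 (Ideal.pow_le_self two_ne_zero h)
  refine le_antisymm (Ideal.span_le.2 (Set.pair_subset ?_ ?_)) ?_
  · exact mem_of_sub_mem hx' (add_mem (Ideal.mul_mem_left _ a hx) (Ideal.mul_mem_left _ b hy))
  · exact mem_of_sub_mem hy' (add_mem (Ideal.mul_mem_left _ c hx) (Ideal.mul_mem_left _ d hy))
  suffices h : maximalIdeal A ^ 1 ≤ Ideal.span {x', y'} ⊔ maximalIdeal A ^ 2 by
    simpa only [pow_one] using pow_le_of_le_sup_pow_succ h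
  rw [pow_one, ← hxy, Ideal.span_le, hxy]
  have mem_sup (r s t u : A) : r * x' + s * y' + (t * (x' - (a * x + b * y)) +
      u * (y' - (c * x + d * y))) ∈ Ideal.span {x', y'} ⊔ maximalIdeal A ^ 2 :=
    Submodule.add_mem_sup (Ideal.mem_span_pair.2 ⟨r, s, rfl⟩)
      (add_mem (Ideal.mul_mem_left _ t hx') (Ideal.mul_mem_left _ u hy'))
  refine Set.pair_subset ?_ ?_
  · rw [SetLike.mem_coe]
    convert mem_sup (e * d) (-e * b) (-e * d) (e * b) using 1
    linear_combination -x * he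
  · rw [SetLike.mem_coe]
    convert mem_sup (-e * c) (e * a) (e * c) (-e * a) using 1
    linear_combination -y * he

lemma span_pair_eq_pow_succ {x y u v p q : A} {k : ℕ} (hxy : Ideal.span {x, y} = maximalIdeal A)
    (huv : Ideal.span {u, v} = maximalIdeal A ^ k) (hp : p ∈ maximalIdeal A ^ (k + 1))
    (hq : q ∈ maximalIdeal A ^ (k + 1))
    (h : ∀ z ∈ ({x * u, x * v, y * u, y * v} : Set A),
      z ∈ Ideal.span {p, q} ⊔ maximalIdeal A ^ (k + 2)) :
    Ideal.span {p, q} = maximalIdeal A ^ (k + 1) := by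
  refine le_antisymm (Ideal.span_le.2 (Set.pair_subset hp hq)) (pow_le_of_le_sup_pow_succ ?_)
  have pow_succ_eq : maximalIdeal A ^ (k + 1) = Ideal.span {x * u, x * v, y * u, y * v} := by
    rw [pow_succ', ← huv, ← hxy, Ideal.span_pair_mul_span_pair]
  rw [pow_succ_eq, Ideal.span_le]
  exact h

lemma span_pow_pow_eq_of_mul_mem {x y : A} (hxy : Ideal.span {x, y} = maximalIdeal A)
    (hmul : x * y ∈ maximalIdeal A ^ 3) (k : ℕ) :
    Ideal.span {x ^ (k + 1), y ^ (k + 1)} = maximalIdeal A ^ (k + 1) := by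
  obtain ⟨hx, hy⟩ := mem_maximalIdeal_of_span_pair_eq hxy
  induction k with
  | zero => simpa only [zero_add, pow_one] using hxy
  | succ k ih =>
    refine span_pair_eq_pow_succ hxy ih (Ideal.pow_mem_pow hx _) (Ideal.pow_mem_pow hy _) ?_
    have mul_pow_mem {z : A} (hz : z ∈ maximalIdeal A) :
        x * y * z ^ k ∈ maximalIdeal A ^ (k + 1 + 2) := by
      rw [add_assoc, add_comm, pow_add]
      exact Ideal.mul_mem_mul hmul (Ideal.pow_mem_pow hz k)
    rintro z (rfl | rfl | rfl | rfl)
    · exact Ideal.mem_sup_left (Ideal.mem_span_pair.2 ⟨1, 0, by ring⟩)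
    · exact Ideal.mem_sup_right (by convert mul_pow_mem hy using 1; ring)
    · exact Ideal.mem_sup_right (by convert mul_pow_mem hx using 1; ring)
    · exact Ideal.mem_sup_left (Ideal.mem_span_pair.2 ⟨0, 1, by ring⟩)

lemma span_pow_pow_mul_eq_of_sq_mem {x y : A} (hxy : Ideal.span {x, y} = maximalIdeal A)
    (hsq : y ^ 2 ∈ maximalIdeal A ^ 3) (k : ℕ) :
    Ideal.span {x ^ (k + 1), x ^ k * y} = maximalIdeal A ^ (k + 1) := by
  obtain ⟨hx, hy⟩ := mem_maximalIdeal_of_span_pair_eq hxy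
  induction k with
  | zero => simpa only [zero_add, pow_one, pow_zero, one_mul] using hxy
  | succ k ih =>
    refine span_pair_eq_pow_succ hxy ih (Ideal.pow_mem_pow hx _) ?_ ?_
    · simpa using pow_mul_pow_mem_maximalIdeal_pow hx hy (i := k + 1) (j := 1) le_rfl
    rintro z (rfl | rfl | rfl | rfl)
    · exact Ideal.mem_sup_left (Ideal.mem_span_pair.2 ⟨1, 0, by ring⟩)
    · exact Ideal.mem_sup_left (Ideal.mem_span_pair.2 ⟨0, 1, by ring⟩)
    · exact Ideal.mem_sup_left (Ideal.mem_span_pair.2 ⟨0, 1, by ring⟩)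
    · refine Ideal.mem_sup_right ?_
      rw [mul_left_comm, ← pow_two, pow_add _ k 3]
      exact Ideal.mul_mem_mul (Ideal.pow_mem_pow hx k) hsq

end Generators

section Socle

variable {K A : Type*} [Field K] [CommRing A] [IsLocalRing A] [Algebra K A] [Module.Finite K A]

lemma notMem_pow_succ_of_span_pair_eq
    (hK : ∀ a : A, ∃ c : K, a - algebraMap K A c ∈ maximalIdeal A) {u v : A} {k : ℕ}
    (huv : Ideal.span {u, v} = maximalIdeal A ^ k) (hk : hilbLoc K A k = 2) :
    v ∉ maximalIdeal A ^ (k + 1) := by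
  intro hv
  have := hilbLoc_le_of_pow_le_span_sup (v := fun _ : Unit ↦ u) hK (k := k)
    (fun _ ↦ huv ▸ Ideal.subset_span (by simp)) <| by
      rw [← huv, Ideal.span_le, Set.range_const]
      exact Set.pair_subset (Ideal.mem_sup_left (Ideal.mem_span_singleton_self u))
        (Ideal.mem_sup_right hv)
  rw [hk, Fintype.card_unit] at this
  omega

lemma mem_pow_of_mul_pair_eq_zero {n : ℕ} (hn : maximalIdeal A ^ (n + 1) = ⊥)
    (hsoc : socDimLoc K A = hilbLoc K A n) {x y a : A}
    (hxy : Ideal.span {x, y} = maximalIdeal A) (hx : a * x = 0) (hy : a * y = 0) :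
    a ∈ maximalIdeal A ^ n := by
  refine mem_pow_of_mul_eq_zero hn hsoc fun b hb ↦ ?_
  obtain ⟨r, s, rfl⟩ := Ideal.mem_span_pair.1 (hxy.symm ▸ hb)
  linear_combination r * hx + s * hy

lemma exists_span_range_eq_maximalIdeal_pow (k : ℕ) :
    ∃ v : Fin (hilbLoc K A k) → A, Ideal.span (Set.range v) = maximalIdeal A ^ k := by
  have : IsNoetherianRing A := .of_finite K A
  let b := (Module.finBasis K (gradedPiece K A k)).reindex (finCongr (finrank_gradedPiece k))
  choose v hv using fun i ↦ Ideal.Quotient.mk_surjective (b i : A ⧸ maximalIdeal A ^ (k + 1))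
  have v_mem (i) : v i ∈ maximalIdeal A ^ k :=
    mk_mem_gradedPiece_iff.1 (by rw [hv]; exact (b i).2)
  refine ⟨v, le_antisymm (Ideal.span_le.2 (Set.range_subset_iff.2 v_mem))
    (pow_le_of_le_sup_pow_succ fun a ha ↦ ?_)⟩
  let c := b.repr ⟨_, mk_mem_gradedPiece_iff.2 ha⟩
  have sub_mem : a - ∑ i, algebraMap K A (c i) * v i ∈ maximalIdeal A ^ (k + 1) := by
    rw [← Ideal.Quotient.eq, map_sum]
    refine (congrArg Subtype.val (b.sum_repr ⟨_, mk_mem_gradedPiece_iff.2 ha⟩)).symm.trans ?_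
    simp only [Submodule.coe_sum, Submodule.coe_smul, Algebra.smul_def, map_mul, hv]
    rfl
  rw [← add_sub_cancel (∑ i, algebraMap K A (c i) * v i) a]
  exact Submodule.add_mem_sup (sum_mem fun i _ ↦ Ideal.mul_mem_left _ _
    (Ideal.subset_span ⟨i, rfl⟩)) sub_mem

lemma exists_span_pair_eq_maximalIdeal (h : hilbLoc K A 1 = 2) :
    ∃ x y : A, Ideal.span {x, y} = maximalIdeal A := by
  obtain ⟨v, hv⟩ : ∃ v : Fin 2 → A, Ideal.span (Set.range v) = maximalIdeal A ^ 1 :=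
    h ▸ exists_span_range_eq_maximalIdeal_pow 1
  refine ⟨v 0, v 1, ?_⟩
  rw [← pow_one (maximalIdeal A), ← hv]
  congr 1
  ext a
  simp [Fin.exists_fin_two, eq_comm]

end Socle

section LinearChange

variable {K A : Type*} [Field K] [CommRing A] [IsLocalRing A] [Algebra K A] [Module.Finite K A]

lemma span_smul_add_smul_eq_maximalIdeal {x y : A} (hxy : Ideal.span {x, y} = maximalIdeal A)
    {a b c d : K} (hdet : a * d - b * c ≠ 0) :
    Ideal.span {a • x + b • y, c • x + d • y} = maximalIdeal A := by
  have : IsNoetherianRing A := .of_finite K A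
  refine span_pair_eq_maximalIdeal_of_isUnit_det hxy
    (a := algebraMap K A a) (b := algebraMap K A b) (c := algebraMap K A c) (d := algebraMap K A d)
    ?_ ?_ ?_
  · simpa only [map_sub, map_mul] using hdet.isUnit.map (algebraMap K A)
  all_goals simp only [Algebra.smul_def, sub_self, zero_mem]

lemma exists_eq_smul_of_mem_pow {n : ℕ} (hn : maximalIdeal A ^ (n + 1) = ⊥)
    (h1 : hilbLoc K A n = 1) {u v : A} (hu : u ∈ maximalIdeal A ^ n)
    (hv : v ∈ maximalIdeal A ^ n) (hu0 : u ≠ 0) : ∃ c : K, v = c • u := by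
  obtain ⟨c, hc, hsum⟩ := exists_sum_smul_mem_pow_succ (K := K) (v := ![u, v])
    (Fin.forall_fin_two.2 ⟨hu, hv⟩) (by simp [h1])
  replace hsum : c 0 • u + c 1 • v = 0 := by simpa [hn] using hsum
  have hc1 : c 1 ≠ 0 := fun h1 ↦ hc <| funext <| Fin.forall_fin_two.2
    ⟨(smul_eq_zero_iff_left hu0).1 (by simpa [h1] using hsum), h1⟩
  refine ⟨(c 1)⁻¹ * -c 0, ?_⟩
  rw [mul_smul, neg_smul, neg_eq_of_add_eq_zero_right hsum, inv_smul_smul₀ hc1]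

end LinearChange

section SplitQuadraticForm

variable {A : Type*} [CommRing A] [IsLocalRing A]

lemma exists_span_pair_eq_and_mul_eq_zero [IsNoetherianRing A]
    (h5 : maximalIdeal A ^ 5 = ⊥) {x y : A} (hxy : Ideal.span {x, y} = maximalIdeal A)
    (hmul : x * y ∈ maximalIdeal A ^ 3) :
    ∃ x' y' : A, Ideal.span {x', y'} = maximalIdeal A ∧ x' * y' = 0 := by
  obtain ⟨hx, hy⟩ := mem_maximalIdeal_of_span_pair_eq hxy
  obtain ⟨a, b, hab⟩ := Ideal.mem_span_pair.1
    ((span_pow_pow_eq_of_mul_mem hxy hmul 2).symm ▸ hmul)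
  refine ⟨x - b * y ^ 2, y - a * x ^ 2, span_pair_eq_maximalIdeal_of_isUnit_det hxy
    (a := 1) (b := 0) (c := 0) (d := 1) (by simp) ?_ ?_, ?_⟩
  · convert Ideal.mul_mem_left _ (-b) (Ideal.pow_mem_pow hy 2) using 1
    ring
  · convert Ideal.mul_mem_left _ (-a) (Ideal.pow_mem_pow hx 2) using 1
    ring
  · have sq_eq_zero : x ^ 2 * y ^ 2 = 0 := by
      have := Ideal.pow_le_pow_right (by norm_num : 5 ≤ 3 + 3)
        (pow_add (maximalIdeal A) 3 3 ▸ Ideal.mul_mem_mul hmul hmul)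
      rw [h5, Ideal.mem_bot] at this
      linear_combination this
    linear_combination hab.symm + a * b * sq_eq_zero

variable {K : Type*} [Field K] [Algebra K A] [Module.Finite K A]

lemma pow_four_ne_zero_of_mul_eq_zero
    (hK : ∀ a : A, ∃ c : K, a - algebraMap K A c ∈ maximalIdeal A)
    (hsoc : socDimLoc K A = hilbLoc K A 4) (h3 : hilbLoc K A 3 = 2)
    (h5 : maximalIdeal A ^ 5 = ⊥) {x y : A} (hxy : Ideal.span {x, y} = maximalIdeal A)
    (hmul : x * y = 0) : y ^ 4 ≠ 0 := by
  have : IsNoetherianRing A := .of_finite K A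
  refine fun hy4 ↦ notMem_pow_succ_of_span_pair_eq hK
    (span_pow_pow_eq_of_mul_mem hxy (hmul ▸ zero_mem _) 2) h3
    (mem_pow_of_mul_pair_eq_zero h5 hsoc hxy ?_ ?_)
  · linear_combination y ^ 2 * hmul
  · linear_combination hy4

theorem exists_sq_add_sq_eq_zero_of_mul_mem [IsAlgClosed K] [NeZero (2 : K)]
    (hK : ∀ a : A, ∃ c : K, a - algebraMap K A c ∈ maximalIdeal A)
    (hsoc : socDimLoc K A = 1) (h3 : hilbLoc K A 3 = 2) (h4 : hilbLoc K A 4 = 1)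
    (h5 : maximalIdeal A ^ 5 = ⊥) {x y : A} (hxy : Ideal.span {x, y} = maximalIdeal A)
    (hmul : x * y ∈ maximalIdeal A ^ 3) :
    ∃ x' y' : A, Ideal.span {x', y'} = maximalIdeal A ∧ x' ^ 2 + y' ^ 2 = 0 ∧ y' ^ 4 = 0 := by
  have : IsNoetherianRing A := .of_finite K A
  obtain ⟨x, y, hxy, hmul⟩ := exists_span_pair_eq_and_mul_eq_zero h5 hxy hmul
  obtain ⟨hx, hy⟩ := mem_maximalIdeal_of_span_pair_eq hxy
  have hy4 : y ^ 4 ≠ 0 := pow_four_ne_zero_of_mul_eq_zero hK (hsoc.trans h4.symm) h3 h5 hxy hmul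
  have hx4 : x ^ 4 ≠ 0 := pow_four_ne_zero_of_mul_eq_zero hK (hsoc.trans h4.symm) h3 h5
    (Set.pair_comm x y ▸ hxy) (mul_comm x y ▸ hmul)
  obtain ⟨c, hc⟩ := exists_eq_smul_of_mem_pow (K := K) h5 h4 (Ideal.pow_mem_pow hx 4)
    (Ideal.pow_mem_pow hy 4) hx4
  have hc0 : c ≠ 0 := fun h ↦ hy4 (by rw [hc, h, zero_smul])
  obtain ⟨l, hl⟩ := IsAlgClosed.exists_pow_nat_eq (-c) (n := 4) (by norm_num)
  obtain ⟨i, hi⟩ := IsAlgClosed.exists_pow_nat_eq (-1 : K) two_pos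
  have hdet : l * -i - 1 * (i * l) ≠ 0 := by
    have := two_ne_zero (α := K)
    grind
  have hl' : algebraMap K A l ^ 4 = -algebraMap K A c := by rw [← map_pow, hl, map_neg]
  have hi' : algebraMap K A i ^ 2 = -1 := by rw [← map_pow, hi, map_neg, map_one]
  rw [Algebra.smul_def] at hc
  -- `(l x + y)² - (l x - y)² = 4 l x y = 0`, and `(l x - y)⁴ = l⁴ x⁴ + y⁴ = 0` since `x y = 0`.
  refine ⟨_, _, span_smul_add_smul_eq_maximalIdeal hxy hdet, ?_, ?_⟩ <;>
    simp only [Algebra.smul_def, map_neg, map_mul, map_one]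
  · linear_combination (algebraMap K A l * x - y) ^ 2 * hi' + 4 * algebraMap K A l * hmul
  · linear_combination (algebraMap K A l * x - y) ^ 4 * (algebraMap K A i ^ 2 - 1) * hi' +
      x ^ 4 * hl' + hc + algebraMap K A l * (-4 * (algebraMap K A l * x) ^ 2 +
      6 * algebraMap K A l * x * y - 4 * y ^ 2) * hmul

end SplitQuadraticForm

section SquareQuadraticForm

variable {A : Type*} [CommRing A] [IsLocalRing A]

lemma mul_sq_eq_zero_of_sq_mem (h5 : maximalIdeal A ^ 5 = ⊥) {y z : A}
    (hz : z ∈ maximalIdeal A ^ 2) (hsq : y ^ 2 ∈ maximalIdeal A ^ 3) : z * y ^ 2 = 0 := by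
  simpa only [← pow_add, h5, Ideal.mem_bot] using Ideal.mul_mem_mul hz hsq

variable {K : Type*} [Field K] [Algebra K A] [Module.Finite K A]

lemma pow_three_mul_ne_zero_of_sq_mem
    (hK : ∀ a : A, ∃ c : K, a - algebraMap K A c ∈ maximalIdeal A)
    (hsoc : socDimLoc K A = hilbLoc K A 4) (h3 : hilbLoc K A 3 = 2)
    (h5 : maximalIdeal A ^ 5 = ⊥) {x y : A} (hxy : Ideal.span {x, y} = maximalIdeal A)
    (hsq : y ^ 2 ∈ maximalIdeal A ^ 3) : x ^ 3 * y ≠ 0 := by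
  have : IsNoetherianRing A := .of_finite K A
  have hx2 := Ideal.pow_mem_pow (mem_maximalIdeal_of_span_pair_eq hxy).1 2
  refine fun hx3y ↦ notMem_pow_succ_of_span_pair_eq hK
    (span_pow_pow_mul_eq_of_sq_mem hxy hsq 2) h3 (mem_pow_of_mul_pair_eq_zero h5 hsoc hxy ?_ ?_)
  · linear_combination hx3y
  · linear_combination mul_sq_eq_zero_of_sq_mem h5 hx2 hsq

lemma exists_span_pair_eq_and_pow_four_eq_zero [NeZero (2 : K)]
    (hK : ∀ a : A, ∃ c : K, a - algebraMap K A c ∈ maximalIdeal A)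
    (hsoc : socDimLoc K A = 1) (h3 : hilbLoc K A 3 = 2) (h4 : hilbLoc K A 4 = 1)
    (h5 : maximalIdeal A ^ 5 = ⊥) {x y : A} (hxy : Ideal.span {x, y} = maximalIdeal A)
    (hsq : y ^ 2 ∈ maximalIdeal A ^ 3) :
    ∃ x' : A, Ideal.span {x', y} = maximalIdeal A ∧ x' ^ 4 = 0 := by
  obtain ⟨hx, hy⟩ := mem_maximalIdeal_of_span_pair_eq hxy
  obtain ⟨c, hc⟩ := exists_eq_smul_of_mem_pow (K := K) h5 h4
    (by simpa only [pow_one] using pow_mul_pow_mem_maximalIdeal_pow hx hy (i := 3) (j := 1) le_rfl)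
    (Ideal.pow_mem_pow hx 4)
    (pow_three_mul_ne_zero_of_sq_mem hK (hsoc.trans h4.symm) h3 h5 hxy hsq)
  have four_ne_zero : (4 : K) ≠ 0 := by
    convert mul_ne_zero (two_ne_zero (α := K)) two_ne_zero
    norm_num
  refine ⟨x - (c / 4) • y, ?_, ?_⟩
  · simpa only [one_smul, zero_smul, zero_add, neg_smul, ← sub_eq_add_neg] using
      span_smul_add_smul_eq_maximalIdeal hxy (a := (1 : K)) (b := -(c / 4)) (c := 0) (d := 1)
        (by simp)
  · have hc' : algebraMap K A c = 4 * algebraMap K A (c / 4) := by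
      rw [← map_ofNat (algebraMap K A) 4, ← map_mul, mul_div_cancel₀ _ four_ne_zero]
    have hz : 6 * x ^ 2 - 4 * algebraMap K A (c / 4) * (x * y) + algebraMap K A (c / 4) ^ 2 * y ^ 2
        ∈ maximalIdeal A ^ 2 := by
      have hxy2 := Ideal.mul_mem_mul hx hy
      rw [← pow_two] at hxy2
      exact add_mem (sub_mem (Ideal.mul_mem_left _ _ (Ideal.pow_mem_pow hx 2))
        (Ideal.mul_mem_left _ _ hxy2)) (Ideal.mul_mem_left _ _ (Ideal.pow_mem_pow hy 2))
    rw [Algebra.smul_def] at hc ⊢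
    linear_combination hc + x ^ 3 * y * hc' +
      algebraMap K A (c / 4) ^ 2 * mul_sq_eq_zero_of_sq_mem h5 hz hsq

lemma exists_span_pair_eq_and_sq_eq_smul [NeZero (2 : K)]
    (hK : ∀ a : A, ∃ c : K, a - algebraMap K A c ∈ maximalIdeal A) {x y : A}
    (hxy : Ideal.span {x, y} = maximalIdeal A) (hsq : y ^ 2 ∈ maximalIdeal A ^ 3)
    (hx4 : x ^ 4 = 0) :
    ∃ (y' : A) (c : K), Ideal.span {x, y'} = maximalIdeal A ∧ y' ^ 2 = c • x ^ 3 := by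
  have : IsNoetherianRing A := .of_finite K A
  obtain ⟨hx, -⟩ := mem_maximalIdeal_of_span_pair_eq hxy
  obtain ⟨a, b, hab⟩ := Ideal.mem_span_pair.1
    ((span_pow_pow_mul_eq_of_sq_mem hxy hsq 2).symm ▸ hsq)
  obtain ⟨c, hac⟩ := hK a
  obtain ⟨r, s, hrs⟩ := Ideal.mem_span_pair.1 (hxy.symm ▸ hac)
  have hy : y ^ 2 = algebraMap K A c * x ^ 3 + (b + s * x) * (x ^ 2 * y) := by
    linear_combination -hab - x ^ 3 * hrs + r * hx4
  -- Complete the square.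
  let t := algebraMap K A 2⁻¹
  have ht : 2 * t = 1 := by
    rw [← map_ofNat (algebraMap K A) 2, ← map_mul, mul_inv_cancel₀ two_ne_zero, map_one]
  refine ⟨y - t * (b + s * x) * x ^ 2, c, span_pair_eq_maximalIdeal_of_isUnit_det hxy
    (a := 1) (b := 0) (c := 0) (d := 1) (by simp) (by simp) ?_, ?_⟩
  · convert Ideal.mul_mem_left _ (-t * (b + s * x)) (Ideal.pow_mem_pow hx 2) using 1
    ring
  · rw [Algebra.smul_def]
    linear_combination hy - (b + s * x) * x ^ 2 * y * ht + t ^ 2 * (b + s * x) ^ 2 * hx4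

theorem exists_pow_four_eq_zero_of_sq_mem [IsAlgClosed K] [NeZero (2 : K)]
    (hK : ∀ a : A, ∃ c : K, a - algebraMap K A c ∈ maximalIdeal A)
    (hsoc : socDimLoc K A = 1) (h3 : hilbLoc K A 3 = 2) (h4 : hilbLoc K A 4 = 1)
    (h5 : maximalIdeal A ^ 5 = ⊥) {x y : A} (hxy : Ideal.span {x, y} = maximalIdeal A)
    (hsq : y ^ 2 ∈ maximalIdeal A ^ 3) :
    ∃ x' y' : A, Ideal.span {x', y'} = maximalIdeal A ∧ x' ^ 4 = 0 ∧
      (y' ^ 2 = 0 ∨ y' ^ 2 = x' ^ 3) := by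
  obtain ⟨x, hxy, hx4⟩ := exists_span_pair_eq_and_pow_four_eq_zero hK hsoc h3 h4 h5 hxy hsq
  obtain ⟨y, c, hxy, hy⟩ := exists_span_pair_eq_and_sq_eq_smul hK hxy hsq hx4
  by_cases hc : c = 0
  · exact ⟨x, y, hxy, hx4, .inl (by rw [hy, hc, zero_smul])⟩
  obtain ⟨l, hl⟩ := IsAlgClosed.exists_pow_nat_eq c three_pos
  have hl0 : l ≠ 0 := by
    rintro rfl
    exact hc (hl ▸ zero_pow three_ne_zero)
  refine ⟨l • x, y, ?_, by rw [smul_pow, hx4, smul_zero], .inr (by rw [smul_pow, hl, hy])⟩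
  simpa only [one_smul, zero_smul, zero_add, add_zero] using
    span_smul_add_smul_eq_maximalIdeal hxy (a := l) (b := 0) (c := 0) (d := 1) (by simpa using hl0)

end SquareQuadraticForm

section LeadingForm

lemma exists_linear_factors {K : Type*} [Field K] [IsAlgClosed K] [NeZero (2 : K)] {p q r : K}
    (h : ¬ (p = 0 ∧ q = 0 ∧ r = 0)) :
    ∃ a b c d : K, (a ≠ 0 ∨ b ≠ 0) ∧ (c ≠ 0 ∨ d ≠ 0) ∧
      p = a * c ∧ q = a * d + b * c ∧ r = b * d := by
  by_cases hp : p = 0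
  · exact ⟨0, 1, q, r, by simp, by tauto, by simp [hp], by simp, by simp⟩
  · obtain ⟨s, hs⟩ := IsAlgClosed.exists_eq_mul_self (discrim p q r)
    obtain ⟨z, hz⟩ := exists_quadratic_eq_zero hp ⟨s, hs⟩
    exact ⟨1, -z, p, q + p * z, by simp, .inl hp, by ring, by ring, by linear_combination hz⟩

variable {K A : Type*} [Field K] [CommRing A] [IsLocalRing A] [Algebra K A] [Module.Finite K A]

lemma exists_smul_add_smul_mul_mem_pow_three [IsAlgClosed K] [NeZero (2 : K)]
    (h2 : hilbLoc K A 2 = 2) {x y : A} (hx : x ∈ maximalIdeal A) (hy : y ∈ maximalIdeal A) :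
    ∃ a b c d : K, (a ≠ 0 ∨ b ≠ 0) ∧ (c ≠ 0 ∨ d ≠ 0) ∧
      (a • x + b • y) * (c • x + d • y) ∈ maximalIdeal A ^ 3 := by
  obtain ⟨p, hp, hsum⟩ := exists_sum_smul_mem_pow_succ (K := K) (k := 2)
    (v := fun i : Fin 3 ↦ x ^ (2 - i : ℕ) * y ^ (i : ℕ))
    (fun i ↦ pow_mul_pow_mem_maximalIdeal_pow hx hy (by omega)) (by simp [h2])
  obtain ⟨a, b, c, d, hab, hcd, e0, e1, e2⟩ := exists_linear_factors (p := p 0) (q := p 1)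
    (r := p 2) fun h ↦ hp (by ext i; fin_cases i <;> simp [h])
  refine ⟨a, b, c, d, hab, hcd, ?_⟩
  convert hsum using 1
  simp only [Fin.sum_univ_three, Fin.val_zero, Fin.val_one, Fin.val_two, e0, e1, e2,
    Algebra.smul_def, map_add, map_mul]
  ring

theorem exists_span_pair_eq_and_mul_mem_or_sq_mem [IsAlgClosed K] [NeZero (2 : K)]
    (h1 : hilbLoc K A 1 = 2) (h2 : hilbLoc K A 2 = 2) :
    ∃ x y : A, Ideal.span {x, y} = maximalIdeal A ∧
      (x * y ∈ maximalIdeal A ^ 3 ∨ y ^ 2 ∈ maximalIdeal A ^ 3) := by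
  obtain ⟨x, y, hxy⟩ := exists_span_pair_eq_maximalIdeal h1
  obtain ⟨hx, hy⟩ := mem_maximalIdeal_of_span_pair_eq hxy
  obtain ⟨a, b, c, d, hab, hcd, h⟩ := exists_smul_add_smul_mul_mem_pow_three h2 hx hy
  by_cases hdet : a * d - b * c = 0
  · obtain ⟨t, ht, rfl, rfl⟩ : ∃ t : K, t ≠ 0 ∧ c = t * a ∧ d = t * b := by
      rcases hab with ha | hb
      · refine ⟨c / a, ?_, ?_, ?_⟩ <;> grind
      · refine ⟨d / b, ?_, ?_, ?_⟩ <;> grind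
    have hsq : (a • x + b • y) ^ 2 ∈ maximalIdeal A ^ 3 := by
      rw [mul_smul, mul_smul, ← smul_add, mul_smul_comm, ← pow_two] at h
      exact (((maximalIdeal A ^ 3).restrictScalars K).smul_mem_iff ht).1 h
    rcases hab with ha | hb
    · refine ⟨_, _, span_smul_add_smul_eq_maximalIdeal hxy (a := 0) (b := 1) ?_, .inr hsq⟩
      simpa using ha
    · refine ⟨_, _, span_smul_add_smul_eq_maximalIdeal hxy (a := 1) (b := 0) ?_, .inr hsq⟩
      simpa using hb
  · exact ⟨_, _, span_smul_add_smul_eq_maximalIdeal hxy hdet, .inl h⟩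

end LeadingForm

section Classification

variable {K A : Type*} [Field K] [CommRing A] [IsLocalRing A] [Algebra K A]

lemma exists_sub_algebraMap_mem_of_residueFieldIsK (h : residueFieldIsK K A) (a : A) :
    ∃ c : K, a - algebraMap K A c ∈ maximalIdeal A := by
  obtain ⟨c, hc⟩ := h.2 (residue A a)
  refine ⟨c, (residue_eq_zero_iff _).1 ?_⟩
  rw [map_sub, ← hc, sub_eq_zero]
  rfl

theorem exists_nonempty_algEquiv_normalForm [IsAlgClosed K] [NeZero (2 : K)]
    (hres : residueFieldIsK K A) (hsoc : socDimLoc K A = 1)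
    (h0 : hilbLoc K A 0 = 1) (h1 : hilbLoc K A 1 = 2) (h2 : hilbLoc K A 2 = 2)
    (h3 : hilbLoc K A 3 = 2) (h4 : hilbLoc K A 4 = 1) (h5 : maximalIdeal A ^ 5 = ⊥) :
    ∃ k : Fin 3, Nonempty (A ≃ₐ[K] MvPowerSeries (Fin 2) K ⧸ normalForm K k) := by
  have hK := exists_sub_algebraMap_mem_of_residueFieldIsK hres
  have : Module.Finite K A := finite_of_hilbLoc_ne_zero h5 (h4 ▸ one_ne_zero)
  have hA : Module.finrank K A = 8 := by
    simp only [finrank_eq_sum_hilbLoc h5, Finset.sum_range_succ, Finset.sum_range_zero,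
      h0, h1, h2, h3, h4]
  have nonempty_algEquiv {x y : A} (hxy : Ideal.span {x, y} = maximalIdeal A) {k : Fin 3} :=
    nonempty_algEquiv_normalForm hA ⟨5, by rw [hxy, h5, Ideal.zero_eq_bot]⟩ (hxy ▸ hK) (k := k)
  obtain ⟨x, y, hxy, hmul | hsq⟩ := exists_span_pair_eq_and_mul_mem_or_sq_mem h1 h2
  · obtain ⟨x, y, hxy, hsum, hy⟩ := exists_sq_add_sq_eq_zero_of_mul_mem hK hsoc h3 h4 h5 hxy hmul
    refine ⟨2, nonempty_algEquiv hxy fun F hFx hFy ↦ Ideal.span_le.2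
      (Set.pair_subset ?_ ?_)⟩ <;> simp [RingHom.mem_ker, hFx, hFy, hsum, hy]
  · obtain ⟨x, y, hxy, hx, hy | hy⟩ := exists_pow_four_eq_zero_of_sq_mem hK hsoc h3 h4 h5 hxy hsq
    · refine ⟨0, nonempty_algEquiv hxy fun F hFx hFy ↦ Ideal.span_le.2
        (Set.pair_subset ?_ ?_)⟩ <;> simp [RingHom.mem_ker, hFx, hFy, hx, hy]
    · refine ⟨1, nonempty_algEquiv hxy fun F hFx hFy ↦ Ideal.span_le.2
        (Set.pair_subset ?_ ?_)⟩ <;> simp [RingHom.mem_ker, hFx, hFy, hx, hy]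

end Classification

end Hilbert12221

open Hilbert12221 in
theorem classification_hilbert_12221_general
    {K : Type*} [Field K] [IsAlgClosed K] [NeZero (2 : K)]
    (A : Type*) [CommRing A] [IsLocalRing A] [Algebra K A]
    (hres : residueFieldIsK K A) (hGor : socDimLoc K A = 1)
    (h0 : hilbLoc K A 0 = 1) (h1 : hilbLoc K A 1 = 2) (h2 : hilbLoc K A 2 = 2)
    (h3 : hilbLoc K A 3 = 2) (h4 : hilbLoc K A 4 = 1)
    (hm5 : IsLocalRing.maximalIdeal A ^ 5 = ⊥) :
    (∃! k : Fin 3,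
      ![Nonempty (A ≃ₐ[K] (MvPowerSeries (Fin 2) K ⧸
          (Ideal.span {psX 0 ^ 4, psX 1 ^ 2} : Ideal (MvPowerSeries (Fin 2) K)))),
        Nonempty (A ≃ₐ[K] (MvPowerSeries (Fin 2) K ⧸
          (Ideal.span {psX 0 ^ 4, -psX 0 ^ 3 + psX 1 ^ 2} :
            Ideal (MvPowerSeries (Fin 2) K)))),
        Nonempty (A ≃ₐ[K] (MvPowerSeries (Fin 2) K ⧸
          (Ideal.span {psX 0 ^ 2 + psX 1 ^ 2, psX 1 ^ 4} :
            Ideal (MvPowerSeries (Fin 2) K))))] k) ∧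
    Nonempty ((MvPowerSeries (Fin 2) K ⧸
        (Ideal.span {psX 0 ^ 4, psX 1 ^ 2} : Ideal (MvPowerSeries (Fin 2) K))) ≃ₐ[K]
      (MvPowerSeries (Fin 2) K ⧸
        initialIdeal (Ideal.span {psX 0 ^ 4, psX 1 ^ 2} :
          Ideal (MvPowerSeries (Fin 2) K)))) ∧
    Nonempty ((MvPowerSeries (Fin 2) K ⧸
        (Ideal.span {psX 0 ^ 2 + psX 1 ^ 2, psX 1 ^ 4} :
          Ideal (MvPowerSeries (Fin 2) K))) ≃ₐ[K]
      (MvPowerSeries (Fin 2) K ⧸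
        initialIdeal (Ideal.span {psX 0 ^ 2 + psX 1 ^ 2, psX 1 ^ 4} :
          Ideal (MvPowerSeries (Fin 2) K)))) ∧
    ¬ Nonempty ((MvPowerSeries (Fin 2) K ⧸
        (Ideal.span {psX 0 ^ 4, -psX 0 ^ 3 + psX 1 ^ 2} :
          Ideal (MvPowerSeries (Fin 2) K))) ≃ₐ[K]
      (MvPowerSeries (Fin 2) K ⧸
        initialIdeal (Ideal.span {psX 0 ^ 4, -psX 0 ^ 3 + psX 1 ^ 2} :
          Ideal (MvPowerSeries (Fin 2) K)))) := by
  refine ⟨?_, ?_, ?_, ?_⟩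
  · obtain ⟨k, ⟨e⟩⟩ := exists_nonempty_algEquiv_normalForm hres hGor h0 h1 h2 h3 h4 hm5
    suffices h : ∃! k, Nonempty (A ≃ₐ[K] MvPowerSeries (Fin 2) K ⧸ normalForm K k) by
      convert h using 2 with k
      fin_cases k <;> rfl
    exact ⟨k, ⟨e⟩, fun j ⟨e'⟩ ↦ normalForm_injective_of_algEquiv (e'.symm.trans e)⟩
  · exact ⟨Ideal.quotientEquivAlgOfEq K initialIdeal_normalForm_zero.symm⟩
  · exact ⟨Ideal.quotientEquivAlgOfEq K initialIdeal_normalForm_two.symm⟩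
  · exact not_nonempty_iff.2 isEmpty_normalForm_one_algEquiv_initialIdeal

/-- Classification of Artinian Gorenstein local `K`-algebras with Hilbert
function `{1,2,2,2,1}`: `A` is isomorphic to one and only one of
`(a) = K[[x_1,x_2]]/(x_1^4, x_2^2)`, `(b) = K[[x_1,x_2]]/(x_1^4, -x_1^3+x_2^2)`,
`(c) = K[[x_1,x_2]]/(x_1^2+x_2^2, x_2^4)`; moreover the rings in cases `(a)` and
`(c)` are isomorphic to their associated graded rings, while `(b)` is not. -/
theorem classification_hilbert_12221
    {K : Type*} [Field K] [IsAlgClosed K] [CharZero K]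
    (A : Type*) [CommRing A] [IsLocalRing A] [Algebra K A] [IsArtinianRing A]
    (hres : residueFieldIsK K A) (hGor : socDimLoc K A = 1)
    (h0 : hilbLoc K A 0 = 1) (h1 : hilbLoc K A 1 = 2) (h2 : hilbLoc K A 2 = 2)
    (h3 : hilbLoc K A 3 = 2) (h4 : hilbLoc K A 4 = 1)
    (hm5 : IsLocalRing.maximalIdeal A ^ 5 = ⊥) :
    (∃! k : Fin 3,
      ![Nonempty (A ≃ₐ[K] (MvPowerSeries (Fin 2) K ⧸
          (Ideal.span {psX 0 ^ 4, psX 1 ^ 2} : Ideal (MvPowerSeries (Fin 2) K)))),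
        Nonempty (A ≃ₐ[K] (MvPowerSeries (Fin 2) K ⧸
          (Ideal.span {psX 0 ^ 4, -psX 0 ^ 3 + psX 1 ^ 2} :
            Ideal (MvPowerSeries (Fin 2) K)))),
        Nonempty (A ≃ₐ[K] (MvPowerSeries (Fin 2) K ⧸
          (Ideal.span {psX 0 ^ 2 + psX 1 ^ 2, psX 1 ^ 4} :
            Ideal (MvPowerSeries (Fin 2) K))))] k) ∧
    Nonempty ((MvPowerSeries (Fin 2) K ⧸
        (Ideal.span {psX 0 ^ 4, psX 1 ^ 2} : Ideal (MvPowerSeries (Fin 2) K))) ≃ₐ[K]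
      (MvPowerSeries (Fin 2) K ⧸
        initialIdeal (Ideal.span {psX 0 ^ 4, psX 1 ^ 2} :
          Ideal (MvPowerSeries (Fin 2) K)))) ∧
    Nonempty ((MvPowerSeries (Fin 2) K ⧸
        (Ideal.span {psX 0 ^ 2 + psX 1 ^ 2, psX 1 ^ 4} :
          Ideal (MvPowerSeries (Fin 2) K))) ≃ₐ[K]
      (MvPowerSeries (Fin 2) K ⧸
        initialIdeal (Ideal.span {psX 0 ^ 2 + psX 1 ^ 2, psX 1 ^ 4} :
          Ideal (MvPowerSeries (Fin 2) K)))) ∧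
    ¬ Nonempty ((MvPowerSeries (Fin 2) K ⧸
        (Ideal.span {psX 0 ^ 4, -psX 0 ^ 3 + psX 1 ^ 2} :
          Ideal (MvPowerSeries (Fin 2) K))) ≃ₐ[K]
      (MvPowerSeries (Fin 2) K ⧸
        initialIdeal (Ideal.span {psX 0 ^ 4, -psX 0 ^ 3 + psX 1 ^ 2} :
          Ideal (MvPowerSeries (Fin 2) K)))) := by
  exact classification_hilbert_12221_general A hres hGor h0 h1 h2 h3 h4 hm5
end

section
/- Let I ⊆ R = K[[x_1,…,x_n]] be an ideal such that A = R/I has finite length. Then the pairing ⟨f,g⟩ = (f ∘ g)(0) induces an isomorphism of K-vector spaces (R/I)^* ≅ I^⊥, where I^⊥ = {g ∈ P : f ∘ g = 0 for all f ∈ I}; in particular dim_K R/I = dim_K I^⊥. -/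
/-- The contraction (derivative) action of the power series ring
`R = K[[x_1,…,x_n]]` on the polynomial ring `P = K[y_1,…,y_n]`:
`f ∘ g = f(∂/∂y_1, …, ∂/∂y_n)(g)`.  It is defined on the monomial basis by
`x^α ∘ y^β = (∏ i, (β i)!/(β i - α i)!) y^(β-α)` (zero unless `α ≤ β`), the honest
iterated partial derivative, and extended `K`-linearly. -/
noncomputable def contract {K : Type*} [Field K] {n : ℕ} (f : MvPowerSeries (Fin n) K) :
    MvPolynomial (Fin n) K →ₗ[K] MvPolynomial (Fin n) K :=
  (MvPolynomial.basisMonomials (Fin n) K).constr K fun β =>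
    ∑ α ∈ Finset.Iic β,
      (MvPowerSeries.coeff α f * ∏ i, ((β i).descFactorial (α i) : K)) •
        MvPolynomial.monomial (β - α) (1 : K)

theorem contract_add {K : Type*} [Field K] {n : ℕ} (f g : MvPowerSeries (Fin n) K) :
    contract (f + g) = contract f + contract g := by
  unfold contract
  rw [← map_add]
  congr 1
  funext β
  simp only [Pi.add_apply]
  rw [← Finset.sum_add_distrib]
  exact Finset.sum_congr rfl fun α _ => by rw [map_add, add_mul, add_smul]

theorem contract_zero {K : Type*} [Field K] {n : ℕ} :
    contract (0 : MvPowerSeries (Fin n) K) = 0 := by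
  unfold contract
  convert map_zero ((MvPolynomial.basisMonomials (Fin n) K).constr
    (M' := MvPolynomial (Fin n) K) K) using 2
  funext β
  simp

/-- Macaulay's inverse system `I^⊥ = {g ∈ P : f ∘ g = 0 for all f ∈ I}`,
a `K`-subspace of `P = K[y_1,…,y_n]`. -/
noncomputable def perpSpace {K : Type*} [Field K] {n : ℕ}
    (I : Ideal (MvPowerSeries (Fin n) K)) : Submodule K (MvPolynomial (Fin n) K) where
  carrier := {g | ∀ f ∈ I, contract f g = 0}
  zero_mem' := fun f _ => map_zero _
  add_mem' := fun {a b} ha hb f hf => by rw [map_add, ha f hf, hb f hf, add_zero]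
  smul_mem' := fun c g hg f hf => by rw [map_smul, hg f hf, smul_zero]

/-!
Let `⟨f, g⟩ = (f ∘ g)(0)`. In characteristic zero the monomials `x^β` and `y^β / β!` are dual to
each other, so `g` is determined by the functional `⟨·, g⟩`, and the functionals that arise in this
way are exactly those that depend on finitely many coefficients only. The action of `R` on `P` is
adjoint to multiplication, `⟨h f, g⟩ = ⟨h, f ∘ g⟩`, hence `g ∈ I^⊥` if and only if `⟨·, g⟩` vanishes
on `I`. If `R/I` is Artinian, then `I` contains a power of each variable, because the variables lie
in the Jacobson radical of `R`. Every functional vanishing on `I` then depends on finitely many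
coefficients only, so `g ↦ ⟨·, g⟩` maps `I^⊥` isomorphically onto the annihilator of `I`, which is
`(R/I)^*`.
-/

open Finset Module

section MultiIndex

variable {σ : Type*} [Fintype σ]

/-- The factorial `β! = ∏ i, (β i)!` of a multi-index, with which the monomials `x^β` and `y^β` are
paired by contraction. -/
def multiIndexFactorial (β : σ →₀ ℕ) : ℕ := ∏ i, (β i).factorial

theorem multiIndexFactorial_ne_zero (β : σ →₀ ℕ) : multiIndexFactorial β ≠ 0 :=
  Finset.prod_ne_zero_iff.2 fun i _ => Nat.factorial_ne_zero (β i)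

theorem multiIndexFactorial_mul_prod_descFactorial (α γ : σ →₀ ℕ) :
    multiIndexFactorial γ * ∏ i, ((α + γ) i).descFactorial (α i) =
      multiIndexFactorial (α + γ) := by
  rw [multiIndexFactorial, multiIndexFactorial, ← prod_mul_distrib]
  refine prod_congr rfl fun i _ => ?_
  simpa using Nat.factorial_mul_descFactorial (Nat.le_add_right (α i) (γ i))

end MultiIndex

theorem sum_Iic_tsub_eq_sum_antidiagonal {A M : Type*} [AddCommMonoid A] [PartialOrder A]
    [CanonicallyOrderedAdd A] [Sub A] [OrderedSub A] [AddLeftReflectLE A] [LocallyFiniteOrderBot A]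
    [HasAntidiagonal A] [AddCommMonoid M] (b : A) (F : A → A → M) :
    ∑ a ∈ Iic b, F a (b - a) = ∑ p ∈ antidiagonal b, F p.1 p.2 := by
  refine sum_nbij' (fun a => (a, b - a)) Prod.fst ?_ ?_ ?_ ?_ ?_
  · exact fun a ha => mem_antidiagonal.2 (add_tsub_cancel_of_le (mem_Iic.1 ha))
  · exact fun p hp => mem_Iic.2 (le_self_add.trans_eq (mem_antidiagonal.1 hp))
  · exact fun a _ => rfl
  · intro p hp
    rw [← mem_antidiagonal.1 hp, add_tsub_cancel_left]
  · exact fun a _ => rfl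

theorem exists_pow_mem_of_mem_jacobson {A : Type*} [CommRing A] (I : Ideal A)
    [IsArtinian A (A ⧸ I)] {a : A} (ha : a ∈ I.jacobson) : ∃ N : ℕ, a ^ N ∈ I := by
  obtain ⟨N, y, hy⟩ := IsArtinian.exists_pow_succ_smul_dvd a (1 : A ⧸ I)
  obtain ⟨b, rfl⟩ := Ideal.Quotient.mk_surjective y
  have hstable : a ^ (N + 1) * b - a ^ N ∈ I := by
    rw [← Ideal.Quotient.mk_eq_mk_iff_sub_mem, map_mul]
    simpa [Algebra.smul_def] using hy
  obtain ⟨z, hz⟩ := Ideal.mem_jacobson_iff.1 ha (-b)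
  refine ⟨N, ?_⟩
  have hpow : a ^ N = -(a ^ N * (z * -b * a + z - 1) + z * (a ^ (N + 1) * b - a ^ N)) := by ring
  rw [hpow]
  exact I.neg_mem (I.add_mem (I.mul_mem_left _ hz) (I.mul_mem_left _ hstable))

theorem X_mem_jacobson {σ A : Type*} [CommRing A] (I : Ideal (MvPowerSeries σ A)) (i : σ) :
    MvPowerSeries.X i ∈ I.jacobson := by
  refine Ideal.jacobson_mono bot_le (Ideal.mem_jacobson_bot.2 fun f => ?_)
  rw [MvPowerSeries.isUnit_iff_constantCoeff]
  simp

theorem mem_ideal_of_forall_le_coeff_eq_zero {σ A : Type*} [Finite σ] [CommSemiring A]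
    {I : Ideal (MvPowerSeries σ A)} {N : σ →₀ ℕ}
    (hN : ∀ i, (MvPowerSeries.X i : MvPowerSeries σ A) ^ (N i + 1) ∈ I)
    {f : MvPowerSeries σ A} (hf : ∀ β ≤ N, MvPowerSeries.coeff β f = 0) : f ∈ I := by
  classical
  have := Fintype.ofFinite σ
  have hlarge (β : σ →₀ ℕ) : ¬ β ≤ N → ∃ i, N i < β i := by
    simp [Finsupp.le_def]
  choose i hi using hlarge
  -- `part j` collects the terms of `f` assigned to `j`, so it is divisible by `X j ^ (N j + 1)`.
  let part (j : σ) : MvPowerSeries σ A := fun β =>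
    if ∃ h : ¬ β ≤ N, i β h = j then MvPowerSeries.coeff β f else 0
  have coeff_part (j : σ) (β : σ →₀ ℕ) : MvPowerSeries.coeff β (part j) =
      if ∃ h : ¬ β ≤ N, i β h = j then MvPowerSeries.coeff β f else 0 := rfl
  have hsum : f = ∑ j, part j := by
    ext β
    simp only [map_sum, coeff_part]
    by_cases h : β ≤ N
    · simp [hf β h]
    · simp [h]
  rw [hsum]
  refine I.sum_mem fun j _ => I.mem_of_dvd (MvPowerSeries.X_pow_dvd_iff.2 fun β hβ => ?_) (hN j)
  rw [coeff_part, if_neg]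
  rintro ⟨h, rfl⟩
  exact (hi β h).not_ge (Nat.lt_succ_iff.1 hβ)

section Contraction

variable {K : Type*} [Field K] {n : ℕ}

theorem contract_monomial (f : MvPowerSeries (Fin n) K) (β : Fin n →₀ ℕ) (c : K) :
    contract f (MvPolynomial.monomial β c) = ∑ p ∈ antidiagonal β, MvPolynomial.monomial p.2
      (MvPowerSeries.coeff p.1 f * (∏ i, (β i).descFactorial (p.1 i) : ℕ) * c) := by
  have hβ : MvPolynomial.monomial β c = c • MvPolynomial.basisMonomials (Fin n) K β := by
    simp [MvPolynomial.smul_monomial]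
  rw [hβ, map_smul, contract, Basis.constr_basis, smul_sum,
    ← sum_Iic_tsub_eq_sum_antidiagonal β fun α γ => MvPolynomial.monomial γ
      (MvPowerSeries.coeff α f * (∏ i, (β i).descFactorial (α i) : ℕ) * c)]
  refine sum_congr rfl fun α _ => ?_
  rw [smul_smul, MvPolynomial.smul_monomial, smul_eq_mul, mul_one, mul_comm c, Nat.cast_prod]

theorem contract_smul (c : K) (f : MvPowerSeries (Fin n) K) :
    contract (c • f) = c • contract f := by
  refine MvPolynomial.linearMap_ext fun β => LinearMap.ext_ring ?_
  simp [contract_monomial, smul_sum, MvPolynomial.smul_monomial, mul_assoc]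

/-- The pairing `⟨f, g⟩ = (f ∘ g)(0)` between power series and polynomials, as a bilinear map;
evaluation at `0` is encoded as the constant coefficient. -/
noncomputable def contractPairing :
    MvPowerSeries (Fin n) K →ₗ[K] MvPolynomial (Fin n) K →ₗ[K] K :=
  LinearMap.mk₂ K (fun f g => MvPolynomial.coeff 0 (contract f g))
    (fun f f' g => by rw [contract_add, LinearMap.add_apply, MvPolynomial.coeff_add])
    (fun c f g => by rw [contract_smul, LinearMap.smul_apply, MvPolynomial.coeff_smul])
    (fun f g g' => by rw [map_add, MvPolynomial.coeff_add])
    (fun c f g => by rw [map_smul, MvPolynomial.coeff_smul])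

theorem contractPairing_apply (f : MvPowerSeries (Fin n) K) (g : MvPolynomial (Fin n) K) :
    contractPairing f g = MvPolynomial.coeff 0 (contract f g) := rfl

theorem contractPairing_monomial_right (f : MvPowerSeries (Fin n) K) (β : Fin n →₀ ℕ) (c : K) :
    contractPairing f (MvPolynomial.monomial β c) =
      multiIndexFactorial β * MvPowerSeries.coeff β f * c := by
  rw [contractPairing_apply, contract_monomial, MvPolynomial.coeff_sum,
    sum_eq_single_of_mem (β, 0) (by simp)]
  · rw [MvPolynomial.coeff_monomial, if_pos rfl, mul_comm (MvPowerSeries.coeff β f)]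
    simp only [multiIndexFactorial, Nat.descFactorial_self]
  · rintro ⟨α, γ⟩ hαγ hne
    have hγ : γ ≠ 0 := by
      rintro rfl
      exact hne (by simpa using hαγ)
    exact MvPolynomial.coeff_monomial _ _ _ |>.trans (if_neg hγ)

theorem contractPairing_monomial_left (β : Fin n →₀ ℕ) (g : MvPolynomial (Fin n) K) :
    contractPairing (MvPowerSeries.monomial β 1) g =
      multiIndexFactorial β * MvPolynomial.coeff β g := by
  induction g using MvPolynomial.induction_on' with
  | add p q hp hq => rw [map_add, hp, hq, MvPolynomial.coeff_add, mul_add]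
  | monomial α c =>
    classical
    rw [contractPairing_monomial_right, MvPowerSeries.coeff_monomial, MvPolynomial.coeff_monomial]
    split_ifs with h
    · rw [h, mul_one]
    · simp

theorem contractPairing_mul (h f : MvPowerSeries (Fin n) K) (g : MvPolynomial (Fin n) K) :
    contractPairing (h * f) g = contractPairing h (contract f g) := by
  classical
  induction g using MvPolynomial.induction_on' with
  | add p q hp hq => rw [map_add, map_add, map_add, hp, hq]
  | monomial β c =>
    rw [contractPairing_monomial_right, contract_monomial, map_sum, mul_comm h f,
      MvPowerSeries.coeff_mul, mul_sum, sum_mul]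
    refine sum_congr rfl fun ⟨α, γ⟩ hαγ => ?_
    obtain rfl := mem_antidiagonal.1 hαγ
    rw [contractPairing_monomial_right, ← multiIndexFactorial_mul_prod_descFactorial]
    push_cast
    ring

end Contraction

section Duality

variable {K : Type*} [Field K] [CharZero K] {n : ℕ}

theorem contractPairing_flip_injective :
    Function.Injective (contractPairing (K := K) (n := n)).flip := by
  refine (injective_iff_map_eq_zero _).2 fun g hg => MvPolynomial.ext _ _ fun β => ?_
  have hβ := LinearMap.congr_fun hg (MvPowerSeries.monomial β 1)
  rw [LinearMap.flip_apply, contractPairing_monomial_left, LinearMap.zero_apply] at hβ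
  exact (mul_eq_zero.1 hβ).resolve_left (Nat.cast_ne_zero.2 (multiIndexFactorial_ne_zero β))

theorem exists_contractPairing_flip_eq (s : Finset (Fin n →₀ ℕ))
    (ξ : Dual K (MvPowerSeries (Fin n) K))
    (hξ : ∀ f, (∀ β ∈ s, MvPowerSeries.coeff β f = 0) → ξ f = 0) :
    ∃ g, contractPairing.flip g = ξ := by
  classical
  refine ⟨∑ β ∈ s, MvPolynomial.monomial β
    ((multiIndexFactorial β : K)⁻¹ * ξ (MvPowerSeries.monomial β 1)), LinearMap.ext fun f => ?_⟩
  have htrunc : ξ f = ξ (∑ β ∈ s, MvPowerSeries.coeff β f • MvPowerSeries.monomial β 1) := by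
    rw [← sub_eq_zero, ← map_sub]
    refine hξ _ fun γ hγ => ?_
    simp [MvPowerSeries.coeff_monomial, hγ]
  rw [htrunc, LinearMap.flip_apply, map_sum, map_sum]
  refine sum_congr rfl fun β _ => ?_
  have hβ : (multiIndexFactorial β : K) ≠ 0 := Nat.cast_ne_zero.2 (multiIndexFactorial_ne_zero β)
  rw [contractPairing_monomial_right, map_smul, smul_eq_mul]
  field_simp

theorem perpSpace_eq_comap_dualAnnihilator (I : Ideal (MvPowerSeries (Fin n) K)) :
    perpSpace I = (I.restrictScalars K).dualAnnihilator.comap contractPairing.flip := by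
  ext g
  rw [Submodule.mem_comap, Submodule.mem_dualAnnihilator]
  constructor
  · intro hg f hf
    rw [LinearMap.flip_apply, contractPairing_apply, hg f hf, MvPolynomial.coeff_zero]
  · intro hg f hf
    refine contractPairing_flip_injective (LinearMap.ext fun h => ?_)
    rw [map_zero, LinearMap.flip_apply, ← contractPairing_mul]
    exact hg _ (I.mul_mem_left h hf)

theorem dualAnnihilator_le_range_contractPairing_flip (I : Ideal (MvPowerSeries (Fin n) K))
    [IsArtinian (MvPowerSeries (Fin n) K) (MvPowerSeries (Fin n) K ⧸ I)] :
    (I.restrictScalars K).dualAnnihilator ≤ contractPairing.flip.range := by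
  intro ξ hξ
  choose N hN using fun i : Fin n => exists_pow_mem_of_mem_jacobson I (X_mem_jacobson I i)
  refine exists_contractPairing_flip_eq (Iic (Finsupp.equivFunOnFinite.symm N)) ξ fun f hf => ?_
  refine (Submodule.mem_dualAnnihilator ξ).1 hξ f
    (mem_ideal_of_forall_le_coeff_eq_zero (fun i => ?_) fun β hβ => hf β (mem_Iic.2 hβ))
  exact I.pow_mem_of_pow_mem (hN i) (Nat.le_succ _)

/-- Macaulay's inverse system as the space of functionals on `R` that vanish on `I`, by way of
`g ↦ ⟨·, g⟩`. -/
noncomputable def perpSpaceEquivDualAnnihilator (I : Ideal (MvPowerSeries (Fin n) K))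
    [IsArtinian (MvPowerSeries (Fin n) K) (MvPowerSeries (Fin n) K ⧸ I)] :
    perpSpace I ≃ₗ[K] (I.restrictScalars K).dualAnnihilator :=
  LinearEquiv.ofBijective
    (contractPairing.flip.restrict (perpSpace_eq_comap_dualAnnihilator I).le)
    ⟨fun _ _ h => Subtype.ext (contractPairing_flip_injective (congrArg Subtype.val h)), by
      rintro ⟨ξ, hξ⟩
      obtain ⟨g, rfl⟩ := dualAnnihilator_le_range_contractPairing_flip I hξ
      exact ⟨⟨g, (perpSpace_eq_comap_dualAnnihilator I).ge hξ⟩, rfl⟩⟩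

/-- The duality `(R/I)^* ≅ I^⊥`. Its first two factors identify functionals on `R/I` with
functionals on `R` that vanish on `I`. -/
noncomputable def dualQuotientEquivPerpSpace (I : Ideal (MvPowerSeries (Fin n) K))
    [IsArtinian (MvPowerSeries (Fin n) K) (MvPowerSeries (Fin n) K ⧸ I)] :
    Dual K (MvPowerSeries (Fin n) K ⧸ I) ≃ₗ[K] perpSpace I :=
  (Submodule.Quotient.restrictScalarsEquiv K I).dualMap ≪≫ₗ
    (I.restrictScalars K).dualQuotEquivDualAnnihilator ≪≫ₗ
      (perpSpaceEquivDualAnnihilator I).symm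

theorem contractPairing_dualQuotientEquivPerpSpace (I : Ideal (MvPowerSeries (Fin n) K))
    [IsArtinian (MvPowerSeries (Fin n) K) (MvPowerSeries (Fin n) K ⧸ I)]
    (ξ : Dual K (MvPowerSeries (Fin n) K ⧸ I)) (f : MvPowerSeries (Fin n) K) :
    contractPairing f (dualQuotientEquivPerpSpace I ξ) = ξ (Ideal.Quotient.mk I f) := by
  have h := (perpSpaceEquivDualAnnihilator I).apply_symm_apply
    ((I.restrictScalars K).dualQuotEquivDualAnnihilator
      ((Submodule.Quotient.restrictScalarsEquiv K I).dualMap ξ))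
  exact LinearMap.congr_fun (congrArg Subtype.val h) f

end Duality

theorem dual_iso_perp_general {K : Type*} [Field K] [CharZero K] {n : ℕ}
    (I : Ideal (MvPowerSeries (Fin n) K))
    [IsArtinian (MvPowerSeries (Fin n) K) (MvPowerSeries (Fin n) K ⧸ I)] :
    (∃ e : Dual K (MvPowerSeries (Fin n) K ⧸ I) ≃ₗ[K] perpSpace I,
      ∀ (ξ : Dual K (MvPowerSeries (Fin n) K ⧸ I)) (f : MvPowerSeries (Fin n) K),
        ξ (Ideal.Quotient.mk I f) = MvPolynomial.coeff 0 (contract f (e ξ))) ∧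
    finrank K (MvPowerSeries (Fin n) K ⧸ I) = finrank K (perpSpace I) := by
  refine ⟨⟨dualQuotientEquivPerpSpace I, fun ξ f => ?_⟩, ?_⟩
  · exact (contractPairing_dualQuotientEquivPerpSpace I ξ f).symm
  · rw [← (dualQuotientEquivPerpSpace I).finrank_eq, Subspace.dual_finrank_eq]

/-- Macaulay duality: if `A = R/I` has finite length, the pairing
`⟨f, g⟩ = (f ∘ g)(0)` induces an isomorphism of `K`-vector spaces
`(R/I)^* ≅ I^⊥`; in particular `dim_K R/I = dim_K I^⊥`. -/
theorem dual_iso_perp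
    {K : Type*} [Field K] [IsAlgClosed K] [CharZero K] {n : ℕ}
    (I : Ideal (MvPowerSeries (Fin n) K))
    (hlen : IsFiniteLength (MvPowerSeries (Fin n) K) (MvPowerSeries (Fin n) K ⧸ I)) :
    (∃ e : Module.Dual K (MvPowerSeries (Fin n) K ⧸ I) ≃ₗ[K] perpSpace I,
      ∀ (ξ : Module.Dual K (MvPowerSeries (Fin n) K ⧸ I))
        (f : MvPowerSeries (Fin n) K),
        ξ (Ideal.Quotient.mk I f) =
          MvPolynomial.coeff 0 (contract f ((e ξ : perpSpace I) :
            MvPolynomial (Fin n) K))) ∧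
    Module.finrank K (MvPowerSeries (Fin n) K ⧸ I) =
      Module.finrank K (perpSpace I) := by
  have := (isFiniteLength_iff_isNoetherian_isArtinian.1 hlen).2
  exact dual_iso_perp_general I
end

section
/- For polynomials f, h ∈ P = K[y_1,…,y_n], the cyclic R-submodules generated under the contraction action coincide, ⟨f⟩_R = ⟨h⟩_R, if and only if there exists an invertible element u of R = K[[x_1,…,x_n]] such that f = u ∘ h. -/
theorem span_singleton_eq_iff_exists_isUnit_smul {A M : Type*} [CommRing A] [IsLocalRing A]
    [AddCommGroup M] [Module A M] {x y : M} :
    Submodule.span A {x} = Submodule.span A {y} ↔ ∃ u : A, IsUnit u ∧ u • y = x := by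
  constructor
  · intro hspan
    obtain ⟨u, hu⟩ : ∃ u : A, u • y = x :=
      Submodule.mem_span_singleton.1 (hspan ▸ Submodule.mem_span_singleton_self x)
    obtain ⟨v, hv⟩ : ∃ v : A, v • x = y :=
      Submodule.mem_span_singleton.1 (hspan ▸ Submodule.mem_span_singleton_self y)
    rcases IsLocalRing.isUnit_or_isUnit_one_sub_self (u * v) with huv | huv
    · exact ⟨u, isUnit_of_mul_isUnit_left huv, hu⟩
    · have hx : x = 0 := huv.smul_eq_zero.1 (by rw [sub_smul, one_smul, mul_smul, hv, hu, sub_self])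
      have hy : y = 0 := by rw [← hv, hx, smul_zero]
      exact ⟨1, isUnit_one, by rw [hx, hy, smul_zero]⟩
  · rintro ⟨u, hu, rfl⟩
    exact Submodule.span_singleton_smul_eq hu y

theorem sum_Iic_sum_antidiagonal {A M : Type*} [AddCommMonoid A] [PartialOrder A]
    [CanonicallyOrderedAdd A] [IsOrderedCancelAddMonoid A] [Sub A] [OrderedSub A]
    [LocallyFiniteOrderBot A] [Finset.HasAntidiagonal A] [AddCommMonoid M]
    (b : A) (f : A → A → M) :
    ∑ s ∈ Finset.Iic b, ∑ p ∈ Finset.HasAntidiagonal.antidiagonal s, f p.1 p.2 =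
      ∑ a ∈ Finset.Iic b, ∑ c ∈ Finset.Iic (b - a), f a c := by
  rw [Finset.sum_sigma', Finset.sum_sigma']
  refine Finset.sum_bij' (fun x _ ↦ ⟨x.2.1, x.2.2⟩) (fun x _ ↦ ⟨x.1 + x.2, (x.1, x.2)⟩)
    ?_ ?_ ?_ (fun _ _ ↦ rfl) (fun _ _ ↦ rfl)
  · rintro ⟨s, a, c⟩ hx
    simp only [Finset.mem_sigma, Finset.mem_Iic, Finset.HasAntidiagonal.mem_antidiagonal] at hx ⊢
    obtain ⟨hs, rfl⟩ := hx
    exact ⟨le_self_add.trans hs, le_tsub_of_add_le_left hs⟩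
  · rintro ⟨a, c⟩ hx
    simp only [Finset.mem_sigma, Finset.mem_Iic, Finset.HasAntidiagonal.mem_antidiagonal,
      and_true] at hx ⊢
    exact (le_tsub_iff_left hx.1).1 hx.2
  · rintro ⟨s, a, c⟩ hx
    obtain rfl : a + c = s := by simpa using (Finset.mem_sigma.1 hx).2
    rfl

theorem prod_descFactorial_add {ι : Type*} [Fintype ι] (β α γ : ι → ℕ) :
    ∏ i, (β i).descFactorial (α i + γ i) =
      (∏ i, (β i).descFactorial (α i)) * ∏ i, (β i - α i).descFactorial (γ i) := by
  rw [← Finset.prod_mul_distrib]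
  refine Finset.prod_congr rfl fun i _ ↦ ?_
  rw [← Nat.descFactorial_mul_descFactorial (Nat.le_add_right (α i) (γ i)),
    Nat.add_sub_cancel_left, mul_comm]

section Contraction

variable {K : Type*} [Field K] {n : ℕ}

theorem contract_monomial_one (f : MvPowerSeries (Fin n) K) (β : Fin n →₀ ℕ) :
    contract f (MvPolynomial.monomial β 1) =
      ∑ α ∈ Finset.Iic β,
        (MvPowerSeries.coeff α f * ∏ i, ((β i).descFactorial (α i) : K)) •
          MvPolynomial.monomial (β - α) (1 : K) := by
  simpa only [contract, MvPolynomial.coe_basisMonomials] using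
    (MvPolynomial.basisMonomials (Fin n) K).constr_basis K _ β

theorem contract_one : contract (1 : MvPowerSeries (Fin n) K) = LinearMap.id := by
  classical
  refine (MvPolynomial.basisMonomials (Fin n) K).ext fun β ↦ ?_
  rw [MvPolynomial.coe_basisMonomials, contract_monomial_one, Finset.sum_eq_single 0]
  · simp
  · intro α _ hα
    simp [MvPowerSeries.coeff_one, hα]
  · simp

theorem contract_mul (u v : MvPowerSeries (Fin n) K) :
    contract (u * v) = contract u ∘ₗ contract v := by
  classical
  refine (MvPolynomial.basisMonomials (Fin n) K).ext fun β ↦ ?_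
  let summand (α γ : Fin n →₀ ℕ) : MvPolynomial (Fin n) K :=
    ((MvPowerSeries.coeff α v * ∏ i, ((β i).descFactorial (α i) : K)) *
      (MvPowerSeries.coeff γ u * ∏ i, (((β - α) i).descFactorial (γ i) : K))) •
        MvPolynomial.monomial (β - α - γ) 1
  have summand_eq (α γ : Fin n →₀ ℕ) : summand α γ =
      (MvPowerSeries.coeff α v * MvPowerSeries.coeff γ u *
        ∏ i, ((β i).descFactorial ((α + γ) i) : K)) • MvPolynomial.monomial (β - (α + γ)) 1 := by
    have hprod := congrArg (Nat.cast (R := K)) (prod_descFactorial_add β α γ)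
    push_cast at hprod
    simp only [summand, Finsupp.add_apply, Finsupp.tsub_apply, hprod, tsub_add_eq_tsub_tsub]
    congr 1
    ring
  rw [MvPolynomial.coe_basisMonomials, LinearMap.comp_apply]
  calc contract (u * v) (MvPolynomial.monomial β 1)
      = ∑ s ∈ Finset.Iic β, ∑ p ∈ Finset.HasAntidiagonal.antidiagonal s, summand p.1 p.2 := by
        rw [mul_comm, contract_monomial_one]
        refine Finset.sum_congr rfl fun s _ ↦ ?_
        rw [MvPowerSeries.coeff_mul, Finset.sum_mul, Finset.sum_smul]
        refine Finset.sum_congr rfl fun p hp ↦ ?_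
        rw [summand_eq, Finset.HasAntidiagonal.mem_antidiagonal.1 hp]
    _ = ∑ α ∈ Finset.Iic β, ∑ γ ∈ Finset.Iic (β - α), summand α γ :=
        sum_Iic_sum_antidiagonal β summand
    _ = contract u (contract v (MvPolynomial.monomial β 1)) := by
        simp only [contract_monomial_one, map_sum, map_smul, Finset.smul_sum, smul_smul, summand]

/-- The contraction action as a ring homomorphism from `K[[x_1,…,x_n]]` to the `K`-linear
endomorphisms of `K[y_1,…,y_n]`; it is what makes contraction a module structure. -/
noncomputable def contractHom :
    MvPowerSeries (Fin n) K →+* Module.End K (MvPolynomial (Fin n) K) where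
  toFun := contract
  map_one' := contract_one
  map_mul' := contract_mul
  map_zero' := contract_zero
  map_add' := contract_add

/-- `K[y_1,…,y_n]` as a module over `K[[x_1,…,x_n]]` by contraction. It is activated only locally,
so as not to impose a scalar action on every polynomial ring. -/
noncomputable abbrev contractModule :
    Module (MvPowerSeries (Fin n) K) (MvPolynomial (Fin n) K) :=
  Module.compHom _ contractHom

attribute [local instance] contractModule

theorem setOf_contract_eq_span_singleton (g : MvPolynomial (Fin n) K) :
    {p : MvPolynomial (Fin n) K | ∃ u : MvPowerSeries (Fin n) K, contract u g = p} =
      Submodule.span (MvPowerSeries (Fin n) K) {g} :=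
  Set.ext fun _ ↦ Submodule.mem_span_singleton.symm

theorem cyclic_submodules_eq_iff_unit_general (f h : MvPolynomial (Fin n) K) :
    {p : MvPolynomial (Fin n) K | ∃ u : MvPowerSeries (Fin n) K, contract u f = p} =
      {p : MvPolynomial (Fin n) K | ∃ u : MvPowerSeries (Fin n) K, contract u h = p} ↔
    ∃ u : MvPowerSeries (Fin n) K, IsUnit u ∧ contract u h = f := by
  rw [setOf_contract_eq_span_singleton, setOf_contract_eq_span_singleton, SetLike.coe_set_eq]
  exact span_singleton_eq_iff_exists_isUnit_smul

end Contraction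

/-- The cyclic `R`-submodules `⟨f⟩_R = R ∘ f` and `⟨h⟩_R = R ∘ h` of `P`
coincide iff `f = u ∘ h` for some invertible `u ∈ R = K[[x_1,…,x_n]]`. -/
theorem cyclic_submodules_eq_iff_unit
    {K : Type*} [Field K] [IsAlgClosed K] [CharZero K] {n : ℕ}
    (f h : MvPolynomial (Fin n) K) :
    {p : MvPolynomial (Fin n) K | ∃ u : MvPowerSeries (Fin n) K, contract u f = p} =
      {p : MvPolynomial (Fin n) K | ∃ u : MvPowerSeries (Fin n) K, contract u h = p} ↔
    ∃ u : MvPowerSeries (Fin n) K, IsUnit u ∧ contract u h = f :=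
  cyclic_submodules_eq_iff_unit_general f h
end
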